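/- arXiv:1311.5163 — 4 statements merged into one kernel-verified Lean document; each statement's English description precedes it below -/
import Mathlib

section
/- Let r ≥ 3, let ζ be a primitive 2^r-th root of unity, and let K = ℚ(ζ − ζ^{-1}), of degree n = 2^{r−2} over ℚ, with D_K the absolute value of its discriminant. Let a_n = (1 − 1/(2n))^n and ε(n) = (ln a_n + ln 2)/(n·ln(2n) − ln 2). Then M(K) ≤ 2^{-n} · (√(D_K))^{1 + ε(n)}. -/
open NumberField IntermediateField

/-- The Euclidean minimum of a number field `K`:
`M(K) = sup_{x ∈ K} inf_{c ∈ O_K} |N_{K/ℚ}(x − c)|`. -/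
noncomputable def euclideanMinimum (K : Type*) [Field K] [NumberField K] : ℝ :=
  ⨆ x : K, ⨅ c : 𝓞 K, |((Algebra.norm ℚ (x - (c : K)) : ℚ) : ℝ)|

/-!
Put `n = 2 ^ (r - 2)` and let `E_k` be the Dickson polynomials with parameter `-1`, so that
`E_k (ζ - ζ⁻¹) = ζ ^ k + (-ζ⁻¹) ^ k`. Traces of powers of `ζ` vanish except at `±1`, whence
`1, E₁ (ζ - ζ⁻¹), …, E_{n-1} (ζ - ζ⁻¹)` is an integral basis of `K = ℚ(ζ - ζ⁻¹)` that is orthogonal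
for the form `T₂ x = ∑ σ, |σ x| ^ 2`, with values `n, 2 * n, …, 2 * n`. Rounding the coordinates of
`x ∈ K` in this basis leaves a remainder `y` with `T₂ y ≤ n * (2 * n - 1) / 4`, and the inequality
of arithmetic and geometric means yields `|N y| ≤ ((2 * n - 1) / 4) ^ (n / 2)`. The same
orthogonality gives `D_K = (2 * n) ^ n / 2`, and with this value `((2 * n - 1) / 4) ^ (n / 2)`
equals `2 ^ (-n) * √D_K ^ (1 + ε n)`.
-/

section NumberField

open ComplexConjugate Module

variable {K ι : Type*} [Field K] [NumberField K] [Fintype ι]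

lemma euclideanMinimum_le_of_forall_exists {C : ℝ}
    (h : ∀ x : K, ∃ c : 𝓞 K, |((Algebra.norm ℚ (x - (c : K)) : ℚ) : ℝ)| ≤ C) :
    euclideanMinimum K ≤ C := by
  refine ciSup_le fun x ↦ ?_
  obtain ⟨c, hc⟩ := h x
  exact ciInf_le_of_le ⟨0, by rintro _ ⟨_, rfl⟩; exact abs_nonneg _⟩ c hc

lemma prod_le_sum_div_card_pow_card {κ : Type*} (s : Finset κ) {z : κ → ℝ}
    (hz : ∀ i ∈ s, 0 ≤ z i) : ∏ i ∈ s, z i ≤ ((∑ i ∈ s, z i) / s.card) ^ s.card := by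
  rcases s.eq_empty_or_nonempty with rfl | hs
  · simp
  have hcard : s.card ≠ 0 := hs.card_ne_zero
  have amgm : (∏ i ∈ s, z i) ^ (s.card : ℝ)⁻¹ ≤ (∑ i ∈ s, z i) / s.card := by
    simpa using Real.geom_mean_le_arith_mean s 1 z (by simp) (by simpa using hs) hz
  have hprod : 0 ≤ ∏ i ∈ s, z i := Finset.prod_nonneg hz
  calc ∏ i ∈ s, z i = ((∏ i ∈ s, z i) ^ (s.card : ℝ)⁻¹) ^ s.card :=
        (Real.rpow_inv_natCast_pow hprod hcard).symm
    _ ≤ ((∑ i ∈ s, z i) / s.card) ^ s.card :=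
        pow_le_pow_left₀ (Real.rpow_nonneg hprod _) amgm _

/-- The quadratic form `T₂(x) = ∑_σ |σ x|²`, the sum being over all complex embeddings of `K`;
through the inequality of arithmetic and geometric means it controls the norm. -/
noncomputable def embeddingNormSq (x : K) : ℝ :=
  ∑ σ : K →ₐ[ℚ] ℂ, ‖σ x‖ ^ 2

lemma abs_norm_sq_le_embeddingNormSq (x : K) :
    |((Algebra.norm ℚ x : ℚ) : ℝ)| ^ 2 ≤
      (embeddingNormSq x / finrank ℚ K) ^ finrank ℚ K := by
  have hnorm : |((Algebra.norm ℚ x : ℚ) : ℝ)| = ∏ σ : K →ₐ[ℚ] ℂ, ‖σ x‖ := by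
    rw [← norm_prod, ← Algebra.norm_eq_prod_embeddings ℚ ℂ x]
    simp
  have hcard : (Finset.univ : Finset (K →ₐ[ℚ] ℂ)).card = finrank ℚ K := by
    rw [Finset.card_univ, AlgHom.card]
  rw [hnorm, ← Finset.prod_pow, ← hcard]
  exact prod_le_sum_div_card_pow_card _ fun _ _ ↦ by positivity

lemma ofReal_embeddingNormSq (x : K) :
    (embeddingNormSq x : ℂ) = ∑ σ : K →ₐ[ℚ] ℂ, σ x * conj (σ x) := by
  simp [embeddingNormSq, Complex.mul_conj']

lemma embeddingNormSq_sum_smul {b : ι → K}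
    (horth : Pairwise fun i j ↦ ∑ σ : K →ₐ[ℚ] ℂ, σ (b i) * conj (σ (b j)) = 0) (t : ι → ℚ) :
    embeddingNormSq (∑ i, t i • b i) = ∑ i, (t i : ℝ) ^ 2 * embeddingNormSq (b i) := by
  apply Complex.ofReal_injective
  have hexpand (σ : K →ₐ[ℚ] ℂ) : σ (∑ i, t i • b i) * conj (σ (∑ i, t i • b i)) =
      ∑ i, ∑ j, (t i * t j : ℂ) * (σ (b i) * conj (σ (b j))) := by
    simp only [map_sum, Rat.smul_def, map_mul, map_ratCast, Finset.sum_mul_sum]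
    exact Finset.sum_congr rfl fun i _ ↦ Finset.sum_congr rfl fun j _ ↦ by ring
  rw [ofReal_embeddingNormSq, Finset.sum_congr rfl fun σ _ ↦ hexpand σ, Finset.sum_comm,
    Complex.ofReal_sum]
  refine Finset.sum_congr rfl fun i _ ↦ ?_
  rw [Finset.sum_comm]
  simp only [← Finset.mul_sum]
  rw [Finset.sum_eq_single i (fun j _ hj ↦ by rw [horth hj.symm, mul_zero]) (by simp),
    ← ofReal_embeddingNormSq]
  push_cast
  ring

lemma euclideanMinimum_le_sqrt_of_pairwise_orthogonal (b : Basis ι ℚ K)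
    (hint : ∀ i, IsIntegral ℤ (b i))
    (horth : Pairwise fun i j ↦ ∑ σ : K →ₐ[ℚ] ℂ, σ (b i) * conj (σ (b j)) = 0) :
    euclideanMinimum K ≤
      √(((∑ i, embeddingNormSq (b i)) / (4 * finrank ℚ K)) ^ finrank ℚ K) := by
  refine euclideanMinimum_le_of_forall_exists fun x ↦ ?_
  let c : 𝓞 K := ∑ i, round (b.repr x i) • ⟨b i, hint i⟩
  have hsub : x - (c : K) = ∑ i, (b.repr x i - round (b.repr x i)) • b i := by
    simp only [sub_smul, Finset.sum_sub_distrib, b.sum_repr, Int.cast_smul_eq_zsmul]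
    congr 1
    exact map_sum (algebraMap (𝓞 K) K) _ _ |>.trans <|
      Finset.sum_congr rfl fun i _ ↦ map_zsmul (algebraMap (𝓞 K) K) _ _
  have hround (i : ι) : ((b.repr x i - round (b.repr x i) : ℚ) : ℝ) ^ 2 ≤ 1 / 4 := by
    have h : |((b.repr x i - round (b.repr x i) : ℚ) : ℝ)| ≤ 1 / 2 := by
      simpa using (Rat.cast_le (K := ℝ)).2 (abs_sub_round (b.repr x i))
    calc _ = |((b.repr x i - round (b.repr x i) : ℚ) : ℝ)| ^ 2 := (sq_abs _).symm
      _ ≤ (1 / 2) ^ 2 := pow_le_pow_left₀ (abs_nonneg _) h 2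
      _ = 1 / 4 := by norm_num
  have hremainder : embeddingNormSq (x - (c : K)) ≤ (∑ i, embeddingNormSq (b i)) / 4 := by
    rw [hsub, embeddingNormSq_sum_smul horth, Finset.sum_div]
    refine Finset.sum_le_sum fun i _ ↦ ?_
    have hnonneg : 0 ≤ embeddingNormSq (b i) := Finset.sum_nonneg fun _ _ ↦ by positivity
    linarith [mul_le_mul_of_nonneg_right (hround i) hnonneg]
  refine ⟨c, Real.le_sqrt_of_sq_le ((abs_norm_sq_le_embeddingNormSq _).trans ?_)⟩
  rw [← div_div]
  have hnonneg : 0 ≤ embeddingNormSq (x - (c : K)) := Finset.sum_nonneg fun _ _ ↦ by positivity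
  gcongr

lemma discr_eq_of_isIntegral_repr [DecidableEq ι] (b : Basis ι ℚ K)
    (hint : ∀ i, IsIntegral ℤ (b i))
    (hrepr : ∀ x : K, IsIntegral ℤ x → ∀ i, IsIntegral ℤ (b.repr x i)) :
    (discr K : ℚ) = Algebra.discr ℚ b := by
  rw [coe_discr]
  refine Algebra.discr_eq_discr_of_toMatrix_coeff_isIntegral K (fun i j ↦ ?_) fun i j ↦ ?_
  · rw [Basis.toMatrix_apply]
    exact integralBasis_repr_apply K ⟨b j, hint j⟩ i ▸ isIntegral_algebraMap
  · rw [Basis.toMatrix_apply, integralBasis_apply]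
    exact hrepr _ (RingOfIntegers.isIntegral_coe _) i

end NumberField

section RootsOfUnity

variable {L : Type*} [Field L] {n m : ℕ} {η η' : L}

lemma isPrimitiveRoot_neg {R : Type*} [CommRing R] {η : R} (hη : IsPrimitiveRoot η n)
    (hn : 4 ∣ n) : IsPrimitiveRoot (-η) n := by
  have heven : Even n := (even_iff_two_dvd.2 (by norm_num)).trans_dvd hn
  refine ⟨by rw [heven.neg_pow, hη.pow_eq_one], fun l hl ↦ ?_⟩
  have hsq : η ^ (l * 2) = 1 := by
    rw [mul_comm, pow_mul, ← neg_sq, ← pow_mul, mul_comm, pow_mul, hl, one_pow]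
  have hl_even : Even l := by
    obtain ⟨k, hk⟩ := hn.trans (hη.dvd_of_pow_eq_one _ hsq)
    exact ⟨k, by lia⟩
  exact hη.dvd_of_pow_eq_one l (by rwa [hl_even.neg_pow] at hl)

lemma isPrimitiveRoot_neg_inv (hη : IsPrimitiveRoot η n) (hn : 4 ∣ n) :
    IsPrimitiveRoot (-η⁻¹) n :=
  isPrimitiveRoot_neg hη.inv hn

lemma isIntegral_sub_inv (hη : IsPrimitiveRoot η n) (hn : 0 < n) : IsIntegral ℤ (η - η⁻¹) :=
  (hη.isIntegral hn).sub (hη.inv.isIntegral hn)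

variable [CharZero L]

lemma isConjRoot_of_isPrimitiveRoot (hη : IsPrimitiveRoot η n) (hη' : IsPrimitiveRoot η' n)
    (hn : 0 < n) : IsConjRoot ℚ η η' :=
  (Polynomial.cyclotomic_eq_minpoly_rat hη hn).symm.trans
    (Polynomial.cyclotomic_eq_minpoly_rat hη' hn)

lemma trace_eq_zero_of_isPrimitiveRoot [Normal ℚ L] (hη : IsPrimitiveRoot η n) (hn : 4 ∣ n)
    (hn0 : 0 < n) : Algebra.trace ℚ L η = 0 := by
  obtain ⟨σ, hσ⟩ :=
    (isConjRoot_of_isPrimitiveRoot (isPrimitiveRoot_neg hη hn) hη hn0).exists_algEquiv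
  have h := Algebra.trace_eq_of_algEquiv σ η
  rw [hσ, map_neg] at h
  linarith

lemma trace_eq_zero_of_pow_two_pow_eq_one [Normal ℚ L] (hη : η ^ 2 ^ m = 1) (hη2 : η ^ 2 ≠ 1) :
    Algebra.trace ℚ L η = 0 := by
  obtain ⟨s, -, hs⟩ := (Nat.dvd_prime_pow Nat.prime_two).1 (orderOf_dvd_of_pow_eq_one hη)
  have hs2 : 2 ≤ s := by
    by_contra! h
    exact hη2 (orderOf_dvd_iff_pow_eq_one.1 (hs ▸ pow_dvd_pow 2 (Nat.lt_succ_iff.1 h)))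
  exact trace_eq_zero_of_isPrimitiveRoot (IsPrimitiveRoot.orderOf η)
    (hs ▸ pow_dvd_pow 2 hs2) (hs ▸ by positivity)

end RootsOfUnity

section Dickson

variable {R S : Type*} [CommRing R] [CommRing S]

lemma eval_add_dickson_one (x y : R) :
    ∀ n, (Polynomial.dickson 1 (x * y) n).eval (x + y) = x ^ n + y ^ n
  | 0 => by norm_num
  | 1 => by simp
  | n + 2 => by
    simp only [Polynomial.dickson_add_two, Polynomial.eval_sub, Polynomial.eval_mul,
      Polynomial.eval_X, Polynomial.eval_C, eval_add_dickson_one x y]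
    ring

/-- The family `1, E₁(θ), E₂(θ), …`, where `E_k` is the Dickson polynomial of the first kind with
parameter `-1`, so that `E_k(ζ - ζ⁻¹) = ζ ^ k + (-ζ⁻¹) ^ k`. The constant `E₀ = 2` is replaced by
`1` in order to obtain an integral basis of `ℚ(ζ - ζ⁻¹)`. -/
noncomputable def dicksonFamily (θ : R) (k : ℕ) : R :=
  if k = 0 then 1 else (Polynomial.dickson 1 (-1 : R) k).eval θ

lemma dicksonFamily_zero (θ : R) : dicksonFamily θ 0 = 1 := if_pos rfl

lemma map_dicksonFamily (f : R →+* S) (θ : R) (k : ℕ) :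
    f (dicksonFamily θ k) = dicksonFamily (f θ) k := by
  unfold dicksonFamily
  split_ifs
  · exact map_one f
  · rw [← Polynomial.eval_map_apply, Polynomial.map_dickson, map_neg, map_one]

lemma dicksonFamily_sub_inv {F : Type*} [Field F] {x : F} (hx : x ≠ 0) {k : ℕ} (hk : k ≠ 0) :
    dicksonFamily (x - x⁻¹) k = x ^ k + (-x⁻¹) ^ k := by
  rw [dicksonFamily, if_neg hk, ← eval_add_dickson_one, mul_neg, mul_inv_cancel₀ hx,
    ← sub_eq_add_neg]

lemma eval_neg_dickson_one (a x : R) :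
    ∀ n, (Polynomial.dickson 1 a n).eval (-x) = (-1) ^ n * (Polynomial.dickson 1 a n).eval x
  | 0 => by simp
  | 1 => by simp
  | n + 2 => by
    simp only [Polynomial.dickson_add_two, Polynomial.eval_sub, Polynomial.eval_mul,
      Polynomial.eval_X, Polynomial.eval_C, eval_neg_dickson_one a x]
    ring

lemma dicksonFamily_neg (θ : R) (k : ℕ) :
    dicksonFamily (-θ) k = (-1) ^ k * dicksonFamily θ k := by
  unfold dicksonFamily
  split_ifs with hk
  · simp [hk]
  · exact eval_neg_dickson_one (-1) θ k

lemma isIntegral_dicksonFamily {θ : R} (hθ : IsIntegral ℤ θ) (k : ℕ) :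
    IsIntegral ℤ (dicksonFamily θ k) :=
  map_dicksonFamily (integralClosure ℤ R).val.toRingHom ⟨θ, hθ⟩ k ▸
    (dicksonFamily (⟨θ, hθ⟩ : integralClosure ℤ R) k).2

/-- The value of `T₂` at the `i`-th member of `dicksonFamily (ζ - ζ⁻¹)`, where `ζ` is a root of
unity of order `4 * n`; up to sign also the `i`-th diagonal entry of its trace matrix. -/
def dicksonWeight (n i : ℕ) : ℕ :=
  if i = 0 then n else 2 * n

lemma sum_dicksonWeight {n : ℕ} (hn : n ≠ 0) :
    (∑ i : Fin n, (dicksonWeight n i : ℝ)) = n * (2 * n - 1) := by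
  obtain ⟨m, rfl⟩ := Nat.exists_eq_add_one_of_ne_zero hn
  simp only [dicksonWeight, Fin.sum_univ_succ, Fin.val_zero, if_true, Fin.val_succ,
    Nat.add_one_ne_zero, if_false, Finset.sum_const, Finset.card_univ, Fintype.card_fin,
    nsmul_eq_mul]
  push_cast
  ring

lemma two_mul_prod_dicksonWeight {n : ℕ} (hn : n ≠ 0) :
    2 * ∏ i : Fin n, dicksonWeight n i = (2 * n) ^ n := by
  obtain ⟨m, rfl⟩ := Nat.exists_eq_add_one_of_ne_zero hn
  simp only [dicksonWeight, Fin.prod_univ_succ, Fin.val_zero, if_true, Fin.val_succ,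
    Nat.add_one_ne_zero, if_false, Finset.prod_const, Finset.card_univ, Fintype.card_fin]
  ring

end Dickson

section Cyclotomic

open ComplexConjugate Module

variable {L : Type*} [Field L] [CharZero L] {r : ℕ} [IsCyclotomicExtension {2 ^ (r + 2)} ℚ L]
  {ζ : L}

variable (L r) in
lemma finrank_cyclotomic_two_pow : finrank ℚ L = 2 ^ (r + 1) := by
  rw [IsCyclotomicExtension.Rat.finrank (2 ^ (r + 2)) L,
    Nat.totient_prime_pow_succ Nat.prime_two (r + 1), Nat.add_one_sub_one, mul_one]

lemma trace_pow_mul_neg_inv_pow (hζ : IsPrimitiveRoot ζ (2 ^ (r + 2))) {i j : ℕ}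
    (hij : i < j + 2 ^ (r + 1)) (hji : j < i + 2 ^ (r + 1)) :
    Algebra.trace ℚ L (ζ ^ i * (-ζ⁻¹) ^ j) = if i = j then (-1) ^ j * 2 ^ (r + 1) else 0 := by
  have hζ0 : ζ ≠ 0 := hζ.ne_zero (by positivity)
  split_ifs with h
  · have hsign : ζ ^ i * (-ζ⁻¹) ^ j = algebraMap ℚ L ((-1) ^ j) := by
      rw [h, ← mul_pow, mul_neg, mul_inv_cancel₀ hζ0, map_pow, map_neg, map_one]
    rw [hsign, Algebra.trace_algebraMap, finrank_cyclotomic_two_pow L r, nsmul_eq_mul, mul_comm,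
      Nat.cast_pow, Nat.cast_ofNat]
  have : Normal ℚ L := (IsCyclotomicExtension.isGalois {2 ^ (r + 2)} ℚ L).to_normal
  refine trace_eq_zero_of_pow_two_pow_eq_one (m := r + 2) ?_ fun hsq ↦ h ?_
  · rw [mul_pow, pow_right_comm, hζ.pow_eq_one, pow_right_comm,
      (isPrimitiveRoot_neg_inv hζ (pow_dvd_pow 2 (Nat.le_add_left 2 r))).pow_eq_one, one_pow,
      one_pow, mul_one]
  · have hzpow : ζ ^ (2 * (i - j) : ℤ) = 1 := by
      rw [← hsq, mul_pow, ← pow_mul, pow_right_comm, neg_sq, mul_sub, zpow_sub₀ hζ0, div_eq_mul_inv,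
        ← pow_mul, inv_pow]
      norm_cast
      rw [mul_comm i]
    have hdvd : (2 ^ (r + 1) : ℤ) ∣ i - j := by
      have h := (hζ.zpow_eq_one_iff_dvd _).1 hzpow
      rw [pow_succ' 2 (r + 1)] at h
      push_cast at h
      exact (mul_dvd_mul_iff_left two_ne_zero).1 h
    have habs : |(i - j : ℤ)| < 2 ^ (r + 1) := by
      zify at hij hji
      rw [abs_lt]
      constructor <;> linarith
    exact_mod_cast sub_eq_zero.1 (Int.eq_zero_of_abs_lt_dvd hdvd habs)

lemma trace_cyclotomic_mem_zmultiples_of_isIntegral (hζ : IsPrimitiveRoot ζ (2 ^ (r + 2))) {x : L}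
    (hx : IsIntegral ℤ x) : Algebra.trace ℚ L x ∈ AddSubgroup.zmultiples ((2 : ℚ) ^ (r + 1)) := by
  have hclosure := IsCyclotomicExtension.Rat.isIntegralClosure_adjoin_singleton hζ
  obtain ⟨y, hy⟩ := hclosure.isIntegral_iff.1 hx
  have hspan : x ∈ Submodule.span ℤ (Submonoid.powers ζ : Set L) := by
    rw [Submonoid.powers_eq_closure, ← Algebra.adjoin_eq_span]
    exact hy ▸ y.2
  clear hx hy
  induction hspan using Submodule.span_induction with
  | mem x hx =>
    obtain ⟨k, rfl : ζ ^ k = x⟩ := hx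
    have : Normal ℚ L := (IsCyclotomicExtension.isGalois {2 ^ (r + 2)} ℚ L).to_normal
    have htrace_one : Algebra.trace ℚ L 1 = 2 ^ (r + 1) := by
      simpa using trace_pow_mul_neg_inv_pow hζ (i := 0) (j := 0) (by simp) (by simp)
    by_cases hsq : (ζ ^ k) ^ 2 = 1
    · rcases sq_eq_one_iff.1 hsq with h | h
      · rw [h, htrace_one]
        exact AddSubgroup.mem_zmultiples _
      · rw [h, map_neg, htrace_one]
        exact neg_mem (AddSubgroup.mem_zmultiples _)
    · rw [trace_eq_zero_of_pow_two_pow_eq_one (m := r + 2)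
        (by rw [pow_right_comm, hζ.pow_eq_one, one_pow]) hsq]
      exact zero_mem _
  | zero => rw [map_zero]; exact zero_mem _
  | add y z _ _ hy hz => rw [map_add]; exact add_mem hy hz
  | smul a y _ hy => rw [map_zsmul]; exact zsmul_mem hy a

variable {K : Type*} [Field K] [Algebra K L] {θ : K} (hζ : IsPrimitiveRoot ζ (2 ^ (r + 2)))
  (hθ : algebraMap K L θ = ζ - ζ⁻¹)

include hζ hθ

lemma conj_embedding_eq_neg (σ : K →+* ℂ) : conj (σ θ) = -σ θ := by
  have : CharZero K := (algebraMap K L).charZero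
  have : FiniteDimensional ℚ L := IsCyclotomicExtension.finiteDimensional {2 ^ (r + 2)} ℚ L
  have : FiniteDimensional K L := FiniteDimensional.right ℚ K L
  let φ := ComplexEmbedding.lift L σ
  have hnorm : ‖φ ζ‖ = 1 :=
    Complex.norm_eq_one_of_pow_eq_one (n := 2 ^ (r + 2))
      (by rw [← map_pow, hζ.pow_eq_one, map_one]) (by positivity)
  have hφ : σ θ = φ ζ - (φ ζ)⁻¹ := by
    rw [← ComplexEmbedding.lift_algebraMap_apply L σ, hθ, map_sub, map_inv₀]
  rw [hφ, Complex.inv_eq_conj hnorm, map_sub, Complex.conj_conj, neg_sub]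

lemma conj_embedding_dicksonFamily (σ : K →+* ℂ) (k : ℕ) :
    conj (σ (dicksonFamily θ k)) = (-1) ^ k * σ (dicksonFamily θ k) := by
  rw [map_dicksonFamily, map_dicksonFamily, conj_embedding_eq_neg hζ hθ, dicksonFamily_neg]

lemma trace_dicksonFamily_mul_neg_inv_pow {i j : ℕ} (hi : i < 2 ^ r) (hj : j < 2 ^ r) :
    Algebra.trace ℚ L (algebraMap K L (dicksonFamily θ i) * (-ζ⁻¹) ^ j) =
      if i = j then (-1) ^ j * 2 ^ (r + 1) else 0 := by
  have hζ0 : ζ ≠ 0 := hζ.ne_zero (by positivity)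
  have hpow : 2 ^ (r + 1) = 2 * 2 ^ r := pow_succ' 2 r
  rw [map_dicksonFamily, hθ]
  rcases eq_or_ne i 0 with rfl | hi0
  · rw [dicksonFamily_zero, ← pow_zero ζ]
    exact trace_pow_mul_neg_inv_pow hζ (by lia) (by lia)
  · have hsum : (-ζ⁻¹) ^ i * (-ζ⁻¹) ^ j = ζ ^ 0 * (-ζ⁻¹) ^ (i + j) := by ring
    rw [dicksonFamily_sub_inv hζ0 hi0, add_mul, map_add, hsum,
      trace_pow_mul_neg_inv_pow hζ (by lia) (by lia),
      trace_pow_mul_neg_inv_pow hζ (by lia) (by lia), if_neg (by lia : 0 ≠ i + j), add_zero]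

section Basis

variable [CharZero K]

lemma trace_sum_smul_dicksonFamily_mul_neg_inv_pow (t : Fin (2 ^ r) → ℚ) (j : Fin (2 ^ r)) :
    Algebra.trace ℚ L (algebraMap K L (∑ i, t i • dicksonFamily θ i) * (-ζ⁻¹) ^ (j : ℕ)) =
      (-1) ^ (j : ℕ) * 2 ^ (r + 1) * t j := by
  have hexpand : algebraMap K L (∑ i, t i • dicksonFamily θ i) * (-ζ⁻¹) ^ (j : ℕ) =
      ∑ i, t i • (algebraMap K L (dicksonFamily θ i) * (-ζ⁻¹) ^ (j : ℕ)) := by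
    simp only [map_sum, Finset.sum_mul, algebraMap.coe_smul, smul_mul_assoc]
  rw [hexpand, map_sum]
  simp only [map_smul, smul_eq_mul,
    trace_dicksonFamily_mul_neg_inv_pow hζ hθ (Fin.is_lt _) j.is_lt, Fin.val_inj, mul_ite, mul_zero,
    Finset.sum_ite_eq', Finset.mem_univ, if_true]
  exact mul_comm _ _

lemma linearIndependent_dicksonFamily :
    LinearIndependent ℚ fun i : Fin (2 ^ r) ↦ dicksonFamily θ i := by
  refine Fintype.linearIndependent_iff.2 fun t ht j ↦ ?_
  have h := trace_sum_smul_dicksonFamily_mul_neg_inv_pow hζ hθ t j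
  rw [ht, map_zero, zero_mul, map_zero, eq_comm] at h
  exact (mul_eq_zero.1 h).resolve_left
    (mul_ne_zero (pow_ne_zero _ (neg_ne_zero.2 one_ne_zero)) (by positivity))

variable (hgen : Algebra.adjoin ℚ {θ} = ⊤)

include hgen

lemma exists_algEquiv_apply_eq_neg_inv : ∃ τ : L ≃ₐ[K] L, τ ζ = -ζ⁻¹ := by
  have : Normal ℚ L := (IsCyclotomicExtension.isGalois {2 ^ (r + 2)} ℚ L).to_normal
  obtain ⟨τ, hτ⟩ := (isConjRoot_of_isPrimitiveRoot
    (isPrimitiveRoot_neg_inv hζ (pow_dvd_pow 2 (Nat.le_add_left 2 r))) hζ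
    (by positivity)).exists_algEquiv
  have hfix : τ.toAlgHom.comp (IsScalarTower.toAlgHom ℚ K L) = IsScalarTower.toAlgHom ℚ K L := by
    refine AlgHom.ext_of_adjoin_eq_top hgen ?_
    intro y hy
    rw [Set.mem_singleton_iff.1 hy]
    change τ (algebraMap K L θ) = algebraMap K L θ
    rw [hθ, map_sub, map_inv₀, hτ, inv_neg, inv_inv]
    ring
  exact ⟨AlgEquiv.ofRingEquiv (f := τ.toRingEquiv) (DFunLike.congr_fun hfix), hτ⟩

lemma trace_algebraMap_mul_dicksonFamily (x : K) {k : ℕ} (hk : k ≠ 0) :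
    Algebra.trace ℚ L (algebraMap K L (x * dicksonFamily θ k)) =
      2 * Algebra.trace ℚ L (algebraMap K L x * (-ζ⁻¹) ^ k) := by
  obtain ⟨τ, hτ⟩ := exists_algEquiv_apply_eq_neg_inv hζ hθ hgen
  have hconj : Algebra.trace ℚ L (algebraMap K L x * ζ ^ k) =
      Algebra.trace ℚ L (algebraMap K L x * (-ζ⁻¹) ^ k) := by
    rw [← Algebra.trace_eq_of_algEquiv (τ.restrictScalars ℚ), AlgEquiv.restrictScalars_apply,
      map_mul, map_pow, τ.commutes, hτ]
  rw [map_mul, map_dicksonFamily, hθ, dicksonFamily_sub_inv (hζ.ne_zero (by positivity)) hk,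
    mul_add, map_add, hconj, two_mul]

variable (hr : r ≠ 0)

include hr

lemma finrank_cyclotomic_adjoin_sub_inv_ne_one : finrank K L ≠ 1 := by
  intro hone
  obtain ⟨τ, hτ⟩ := exists_algEquiv_apply_eq_neg_inv hζ hθ hgen
  obtain ⟨x, hx⟩ := (Algebra.finrank_eq_one_iff_bijective_algebraMap.1 hone).2 ζ
  have hfix : ζ = -ζ⁻¹ := by rw [← hτ, ← hx, τ.commutes]
  have hsq : ζ ^ 2 = -1 := by
    rw [sq]
    nth_rw 2 [hfix]
    rw [mul_neg, mul_inv_cancel₀ (hζ.ne_zero (by positivity))]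
  have hdvd : 2 ^ (r + 2) ∣ 2 ^ 2 :=
    hζ.dvd_of_pow_eq_one _ (by rw [sq 2, pow_mul, hsq, neg_one_sq])
  have hle : r + 2 ≤ 2 := (Nat.pow_dvd_pow_iff_le_right one_lt_two).1 hdvd
  lia

lemma finrank_rat_adjoin_sub_inv : finrank ℚ K = 2 ^ r := by
  have : FiniteDimensional ℚ L := IsCyclotomicExtension.finiteDimensional {2 ^ (r + 2)} ℚ L
  have : FiniteDimensional ℚ K := FiniteDimensional.left ℚ K L
  have : FiniteDimensional K L := FiniteDimensional.right ℚ K L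
  have hle : 2 ^ r ≤ finrank ℚ K := by
    simpa using (linearIndependent_dicksonFamily hζ hθ).fintype_card_le_finrank
  have hmul : finrank ℚ K * finrank K L = 2 * 2 ^ r := by
    rw [finrank_mul_finrank, finrank_cyclotomic_two_pow L r, pow_succ']
  have hpos : 0 < finrank K L := finrank_pos
  have htwo : 2 ≤ finrank K L := by
    have := finrank_cyclotomic_adjoin_sub_inv_ne_one hζ hθ hgen hr
    lia
  nlinarith

lemma finrank_cyclotomic_adjoin_sub_inv : finrank K L = 2 := by
  have hmul := finrank_mul_finrank ℚ K L
  rw [finrank_rat_adjoin_sub_inv hζ hθ hgen hr, finrank_cyclotomic_two_pow L r, pow_succ] at hmul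
  exact Nat.eq_of_mul_eq_mul_left (by positivity) hmul

lemma trace_dicksonFamily_mul_dicksonFamily {i j : ℕ} (hi : i < 2 ^ r) (hj : j < 2 ^ r) :
    Algebra.trace ℚ K (dicksonFamily θ i * dicksonFamily θ j) =
      if i = j then (-1) ^ j * (dicksonWeight (2 ^ r) j : ℚ) else 0 := by
  have : FiniteDimensional ℚ L := IsCyclotomicExtension.finiteDimensional {2 ^ (r + 2)} ℚ L
  have : FiniteDimensional ℚ K := FiniteDimensional.left ℚ K L
  have : FiniteDimensional K L := FiniteDimensional.right ℚ K L
  have hpair := trace_dicksonFamily_mul_neg_inv_pow hζ hθ hi hj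
  have htower : Algebra.trace ℚ L (algebraMap K L (dicksonFamily θ i * dicksonFamily θ j)) =
      2 * Algebra.trace ℚ K (dicksonFamily θ i * dicksonFamily θ j) := by
    rw [← Algebra.trace_trace (S := K), Algebra.trace_algebraMap,
      finrank_cyclotomic_adjoin_sub_inv hζ hθ hgen hr, map_nsmul, nsmul_eq_mul, Nat.cast_two]
  refine mul_left_cancel₀ (two_ne_zero' ℚ) (htower.symm.trans ?_)
  rcases eq_or_ne j 0 with rfl | hj0
  · rw [pow_zero, mul_one] at hpair
    rw [dicksonFamily_zero, mul_one, hpair, dicksonWeight, if_pos rfl]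
    push_cast
    rw [mul_ite]
    ring_nf
  · rw [trace_algebraMap_mul_dicksonFamily hζ hθ hgen _ hj0, hpair, dicksonWeight, if_neg hj0]
    push_cast
    ring_nf

/-- The basis `1, E₁ θ, …, E_{n-1} θ` of `K = ℚ(ζ - ζ⁻¹)`, where `θ = ζ - ζ⁻¹`, `n = 2 ^ r` and `ζ`
is a root of unity of order `4 * n`. It is an integral basis, orthogonal both for the trace form and
for `T₂`. The field `K` enters as an abstract field generated by `θ` and embedded into `ℚ(ζ)`. -/
noncomputable def dicksonBasis : Basis (Fin (2 ^ r)) ℚ K :=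
  basisOfLinearIndependentOfCardEqFinrank (linearIndependent_dicksonFamily hζ hθ)
    (by rw [Fintype.card_fin, finrank_rat_adjoin_sub_inv hζ hθ hgen hr])

lemma dicksonBasis_apply (i : Fin (2 ^ r)) :
    dicksonBasis hζ hθ hgen hr i = dicksonFamily θ i := by
  rw [dicksonBasis, coe_basisOfLinearIndependentOfCardEqFinrank]

lemma isIntegral_dicksonBasis (i : Fin (2 ^ r)) : IsIntegral ℤ (dicksonBasis hζ hθ hgen hr i) := by
  have hint : IsIntegral ℤ (algebraMap K L θ) := hθ ▸ isIntegral_sub_inv hζ (by positivity)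
  rw [dicksonBasis_apply]
  exact isIntegral_dicksonFamily
    ((isIntegral_algebraMap_iff (algebraMap K L).injective).1 hint) i

lemma isIntegral_dicksonBasis_repr {x : K} (hx : IsIntegral ℤ x) (i : Fin (2 ^ r)) :
    IsIntegral ℤ ((dicksonBasis hζ hθ hgen hr).repr x i) := by
  have hint : IsIntegral ℤ (algebraMap K L x * (-ζ⁻¹) ^ (i : ℕ)) :=
    hx.algebraMap.mul ((hζ.inv.isIntegral (by positivity)).neg.pow i)
  obtain ⟨m, hm⟩ := AddSubgroup.mem_zmultiples_iff.1
    (trace_cyclotomic_mem_zmultiples_of_isIntegral hζ hint)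
  have hcoord := trace_sum_smul_dicksonFamily_mul_neg_inv_pow hζ hθ
    ((dicksonBasis hζ hθ hgen hr).repr x) i
  simp only [← dicksonBasis_apply hζ hθ hgen hr, Basis.sum_repr] at hcoord
  have hsign : (-1 : ℚ) ^ (i : ℕ) * (-1) ^ (i : ℕ) = 1 := by rw [← mul_pow]; norm_num
  have hrepr : (dicksonBasis hζ hθ hgen hr).repr x i = ((-1) ^ (i : ℕ) * m : ℤ) := by
    refine mul_left_cancel₀ (pow_ne_zero (r + 1) (two_ne_zero' ℚ)) ?_
    rw [← hm, zsmul_eq_mul] at hcoord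
    push_cast
    linear_combination (-1) ^ (i : ℕ) * hcoord.symm -
      2 ^ (r + 1) * (dicksonBasis hζ hθ hgen hr).repr x i * hsign
  rw [hrepr]
  exact isIntegral_algebraMap

end Basis

variable [NumberField K] (hgen : Algebra.adjoin ℚ {θ} = ⊤) (hr : r ≠ 0)

include hgen hr

lemma abs_discr_adjoin_sub_inv : |(discr K : ℝ)| = (2 * 2 ^ r) ^ 2 ^ r / 2 := by
  have htrace : Algebra.traceMatrix ℚ (dicksonBasis hζ hθ hgen hr) =
      Matrix.diagonal fun i : Fin (2 ^ r) ↦ (-1) ^ (i : ℕ) * (dicksonWeight (2 ^ r) i : ℚ) := by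
    ext i j
    rw [Algebra.traceMatrix_apply, Algebra.traceForm_apply, dicksonBasis_apply, dicksonBasis_apply,
      trace_dicksonFamily_mul_dicksonFamily hζ hθ hgen hr i.is_lt j.is_lt, Matrix.diagonal_apply]
    simp only [Fin.val_inj]
    split_ifs with h
    · rw [h]
    · rfl
  have hprod : |(discr K : ℚ)| = ∏ i : Fin (2 ^ r), (dicksonWeight (2 ^ r) i : ℚ) := by
    rw [discr_eq_of_isIntegral_repr _ (isIntegral_dicksonBasis hζ hθ hgen hr)
      fun _ ↦ isIntegral_dicksonBasis_repr hζ hθ hgen hr, Algebra.discr_def, htrace,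
      Matrix.det_diagonal, Finset.abs_prod]
    simp
  have hdouble : 2 * |(discr K : ℚ)| = (2 * 2 ^ r) ^ 2 ^ r := by
    rw [hprod]
    exact_mod_cast two_mul_prod_dicksonWeight (n := 2 ^ r) (by positivity)
  rw [eq_div_iff two_ne_zero, mul_comm]
  exact_mod_cast hdouble

lemma sum_embedding_mul_conj_dicksonFamily {i j : ℕ} (hi : i < 2 ^ r) (hj : j < 2 ^ r) :
    ∑ σ : K →ₐ[ℚ] ℂ, σ (dicksonFamily θ i) * conj (σ (dicksonFamily θ j)) =
      if i = j then (dicksonWeight (2 ^ r) j : ℂ) else 0 := by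
  have hsign : (-1 : ℂ) ^ j * (-1) ^ j = 1 := by rw [← mul_pow]; norm_num
  calc ∑ σ : K →ₐ[ℚ] ℂ, σ (dicksonFamily θ i) * conj (σ (dicksonFamily θ j))
      = (-1) ^ j * ∑ σ : K →ₐ[ℚ] ℂ, σ (dicksonFamily θ i * dicksonFamily θ j) := by
        rw [Finset.mul_sum]
        refine Finset.sum_congr rfl fun σ _ ↦ ?_
        have hconj : conj (σ (dicksonFamily θ j)) = (-1) ^ j * σ (dicksonFamily θ j) :=
          conj_embedding_dicksonFamily hζ hθ σ.toRingHom j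
        rw [hconj, map_mul]
        ring
    _ = (-1) ^ j * (Algebra.trace ℚ K (dicksonFamily θ i * dicksonFamily θ j) : ℂ) := by
        rw [← trace_eq_sum_embeddings, eq_ratCast]
    _ = if i = j then (dicksonWeight (2 ^ r) j : ℂ) else 0 := by
        rw [trace_dicksonFamily_mul_dicksonFamily hζ hθ hgen hr hi hj]
        split_ifs
        · push_cast
          rw [← mul_assoc, hsign, one_mul]
        · simp

lemma embeddingNormSq_dicksonFamily {i : ℕ} (hi : i < 2 ^ r) :
    embeddingNormSq (dicksonFamily θ i) = dicksonWeight (2 ^ r) i := by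
  apply Complex.ofReal_injective
  rw [ofReal_embeddingNormSq, sum_embedding_mul_conj_dicksonFamily hζ hθ hgen hr hi hi, if_pos rfl,
    Complex.ofReal_natCast]

lemma euclideanMinimum_adjoin_sub_inv_le_sqrt :
    euclideanMinimum K ≤ √(((2 * 2 ^ r - 1) / 4) ^ 2 ^ r) := by
  have horth : Pairwise fun i j ↦ ∑ σ : K →ₐ[ℚ] ℂ,
      σ (dicksonBasis hζ hθ hgen hr i) * conj (σ (dicksonBasis hζ hθ hgen hr j)) = 0 := by
    intro i j hij
    simp only [dicksonBasis_apply]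
    rw [sum_embedding_mul_conj_dicksonFamily hζ hθ hgen hr i.is_lt j.is_lt,
      if_neg (Fin.val_ne_of_ne hij)]
  have hsum : ∑ i, embeddingNormSq (dicksonBasis hζ hθ hgen hr i) = 2 ^ r * (2 * 2 ^ r - 1) := by
    simp only [dicksonBasis_apply, embeddingNormSq_dicksonFamily hζ hθ hgen hr (Fin.is_lt _)]
    exact_mod_cast sum_dicksonWeight (n := 2 ^ r) (by positivity)
  refine (euclideanMinimum_le_sqrt_of_pairwise_orthogonal _
    (isIntegral_dicksonBasis hζ hθ hgen hr) horth).trans_eq ?_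
  rw [hsum, finrank_rat_adjoin_sub_inv hζ hθ hgen hr, Nat.cast_pow, Nat.cast_ofNat,
    mul_comm (4 : ℝ), mul_div_mul_left _ _ (by positivity)]

end Cyclotomic

section Analytic

lemma sqrt_rpow_one_add_log_div_log {D x : ℝ} (hD : 0 < D) (hD1 : D ≠ 1) (hx : 0 < x) :
    √D ^ (1 + Real.log x / Real.log D) = √(D * x) := by
  rw [Real.log_div_log, Real.rpow_add (Real.sqrt_pos.2 hD), Real.rpow_one,
    Real.sqrt_mul hD.le, Real.sqrt_eq_rpow D, ← Real.rpow_mul hD.le, mul_comm (1 / 2 : ℝ),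
    Real.rpow_mul hD.le, Real.rpow_logb hD hD1 hx, Real.sqrt_eq_rpow x]

lemma half_pow_mul_sqrt_rpow_eq_sqrt {n : ℕ} (hn : 2 ≤ n) :
    (2 : ℝ)⁻¹ ^ n * √((2 * n : ℝ) ^ n / 2) ^
        (1 + (Real.log ((1 - 1 / (2 * n)) ^ n) + Real.log 2) /
          (n * Real.log (2 * n) - Real.log 2)) =
      √(((2 * n - 1) / 4 : ℝ) ^ n) := by
  have hn' : (2 : ℝ) ≤ n := by exact_mod_cast hn
  have hbase : (0 : ℝ) < 1 - 1 / (2 * n) := by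
    rw [sub_pos, div_lt_one (by positivity)]
    linarith
  have hone_lt : 1 < (2 * n : ℝ) ^ n / 2 := by
    rw [lt_div_iff₀ two_pos, one_mul]
    calc (2 : ℝ) < 2 * n := by linarith
      _ ≤ (2 * n) ^ n := le_self_pow₀ (by linarith) (by lia)
  have hlog : n * Real.log (2 * n) - Real.log 2 = Real.log ((2 * n : ℝ) ^ n / 2) := by
    rw [Real.log_div (by positivity) two_ne_zero, Real.log_pow]
  have hprod : (2 * n : ℝ) ^ n / 2 * ((1 - 1 / (2 * n)) ^ n * 2) = (2 * n - 1) ^ n := by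
    have hsplit : (2 * n - 1 : ℝ) = 2 * n * (1 - 1 / (2 * n)) := by field_simp
    rw [hsplit, mul_pow (2 * n : ℝ) (1 - 1 / (2 * n)), mul_comm _ (2 : ℝ), ← mul_assoc,
      div_mul_cancel₀ _ two_ne_zero]
  have hhalf : (2 : ℝ)⁻¹ ^ n = √((4 : ℝ)⁻¹ ^ n) := by
    rw [eq_comm, Real.sqrt_eq_iff_eq_sq (by positivity) (by positivity), ← pow_mul, mul_comm,
      pow_mul]
    norm_num
  rw [hlog, ← Real.log_mul (by positivity) two_ne_zero,
    sqrt_rpow_one_add_log_div_log (by positivity) hone_lt.ne' (by positivity), hprod, hhalf,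
    ← Real.sqrt_mul (by positivity), ← mul_pow, inv_mul_eq_div]

end Analytic

section Adjoin

variable {k F : Type*} [Field k] [Field F] [Algebra k F]

lemma isCyclotomicExtension_adjoin_simple {n : ℕ} [NeZero n] {ζ : F} (hζ : IsPrimitiveRoot ζ n) :
    IsCyclotomicExtension {n} k k⟮ζ⟯ := by
  have halg : IsAlgebraic k ζ := (hζ.isIntegral (NeZero.pos n)).tower_top.isAlgebraic
  change IsCyclotomicExtension {n} k k⟮ζ⟯.toSubalgebra
  rw [adjoin_simple_toSubalgebra_of_isAlgebraic halg]
  exact hζ.adjoin_isCyclotomicExtension k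

lemma algebraAdjoin_gen_eq_top {x : F} (hx : IsIntegral k x) :
    Algebra.adjoin k {AdjoinSimple.gen k x} = ⊤ :=
  adjoin.powerBasis_gen hx ▸ (adjoin.powerBasis hx).adjoin_gen_eq_top

end Adjoin

theorem euclideanMinimum_adjoin_zeta_sub_zeta_inv_le_eps_general
    {F : Type*} [Field F] [CharZero F]
    (r : ℕ) (hr : 3 ≤ r) (ζ : F) (hζ : IsPrimitiveRoot ζ (2 ^ r))
    [NumberField ℚ⟮ζ - ζ⁻¹⟯] :
    euclideanMinimum ℚ⟮ζ - ζ⁻¹⟯ ≤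
      (2 : ℝ)⁻¹ ^ (2 ^ (r - 2)) *
        (Real.sqrt |(NumberField.discr ℚ⟮ζ - ζ⁻¹⟯ : ℝ)|) ^
          (1 + (Real.log ((1 - 1 / (2 * (2 : ℝ) ^ (r - 2))) ^ (2 ^ (r - 2) : ℕ)) + Real.log 2) /
            ((2 : ℝ) ^ (r - 2) * Real.log (2 * (2 : ℝ) ^ (r - 2)) - Real.log 2)) := by
  obtain ⟨s, rfl⟩ : ∃ s, r = s + 2 := ⟨r - 2, by lia⟩
  have hs : s ≠ 0 := by lia
  have hcyc : IsCyclotomicExtension {2 ^ (s + 2)} ℚ ℚ⟮ζ⟯ := isCyclotomicExtension_adjoin_simple hζ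
  have hle : ℚ⟮ζ - ζ⁻¹⟯ ≤ ℚ⟮ζ⟯ := adjoin_simple_le_iff.2
    (sub_mem (mem_adjoin_simple_self ℚ ζ) (inv_mem (mem_adjoin_simple_self ℚ ζ)))
  let _ : Algebra ℚ⟮ζ - ζ⁻¹⟯ ℚ⟮ζ⟯ := (inclusion hle).toRingHom.toAlgebra
  have hgenζ : IsPrimitiveRoot (AdjoinSimple.gen ℚ ζ) (2 ^ (s + 2)) :=
    .of_map_of_injective (f := ℚ⟮ζ⟯.val) hζ ℚ⟮ζ⟯.val.injective
  have hθ : algebraMap ℚ⟮ζ - ζ⁻¹⟯ ℚ⟮ζ⟯ (AdjoinSimple.gen ℚ (ζ - ζ⁻¹)) =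
      AdjoinSimple.gen ℚ ζ - (AdjoinSimple.gen ℚ ζ)⁻¹ := rfl
  have hgen : Algebra.adjoin ℚ {AdjoinSimple.gen ℚ (ζ - ζ⁻¹)} = ⊤ :=
    algebraAdjoin_gen_eq_top (isIntegral_sub_inv hζ (by positivity)).tower_top
  have hbound := half_pow_mul_sqrt_rpow_eq_sqrt (n := 2 ^ s) (Nat.le_self_pow hs 2)
  push_cast at hbound
  rw [abs_discr_adjoin_sub_inv hgenζ hθ hgen hs, Nat.add_sub_cancel, hbound]
  exact euclideanMinimum_adjoin_sub_inv_le_sqrt hgenζ hθ hgen hs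

theorem euclideanMinimum_adjoin_zeta_sub_zeta_inv_le_eps
    (r : ℕ) (hr : 3 ≤ r) (ζ : ℂ) (hζ : IsPrimitiveRoot ζ (2 ^ r))
    [NumberField ℚ⟮ζ - ζ⁻¹⟯] :
    euclideanMinimum ℚ⟮ζ - ζ⁻¹⟯ ≤
      (2 : ℝ)⁻¹ ^ (2 ^ (r - 2)) *
        (Real.sqrt |(NumberField.discr ℚ⟮ζ - ζ⁻¹⟯ : ℝ)|) ^
          (1 + (Real.log ((1 - 1 / (2 * (2 : ℝ) ^ (r - 2))) ^ (2 ^ (r - 2) : ℕ)) + Real.log 2) /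
            ((2 : ℝ) ^ (r - 2) * Real.log (2 * (2 : ℝ) ^ (r - 2)) - Real.log 2)) :=
  euclideanMinimum_adjoin_zeta_sub_zeta_inv_le_eps_general r hr ζ hζ
end

section
/- Let a_n = (1 − 1/(2n))^n and ε(n) = (ln a_n + ln 2)/(n·ln(2n) − ln 2) for integers n ≥ 2. Then lim_{n → ∞} (n · ln n) · ε(n) = ln 2 − 1/2. -/
open Filter

/-- `a_n = (1 - 1/(2n))^n`. -/
noncomputable def aSeq (n : ℕ) : ℝ := (1 - 1 / (2 * (n : ℝ))) ^ n

/-- `ε(n) = (ln a_n + ln 2) / (n ln(2n) - ln 2)`. -/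
noncomputable def epsSeq (n : ℕ) : ℝ :=
  (Real.log (aSeq n) + Real.log 2) / ((n : ℝ) * Real.log (2 * (n : ℝ)) - Real.log 2)

open Asymptotics Topology

theorem tendsto_mul_div_of_isEquivalent {α 𝕜 : Type*} [NormedField 𝕜] {l : Filter α}
    {u v w : α → 𝕜} {c : 𝕜} (hvw : v ~[l] w) (hw : ∀ᶠ x in l, w x ≠ 0)
    (hu : Tendsto u l (𝓝 c)) : Tendsto (fun x => w x * (u x / v x)) l (𝓝 c) := by
  have hquot : Tendsto (v / w) l (𝓝 1) := (isEquivalent_iff_tendsto_one hw).1 hvw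
  refine (div_one c ▸ hu.div hquot one_ne_zero).congr fun x => ?_
  rw [Pi.div_apply, Pi.div_apply, div_div_eq_mul_div, mul_comm, mul_div_assoc]

theorem log_const_mul_isEquivalent_log {c : ℝ} (hc : c ≠ 0) :
    (fun x => Real.log (c * x)) ~[atTop] Real.log := by
  have hadd : (fun x => Real.log c + Real.log x) ~[atTop] Real.log :=
    IsEquivalent.refl.const_add_of_norm_tendsto_atTop
      (tendsto_norm_atTop_atTop.comp Real.tendsto_log_atTop)
  refine hadd.congr_left ?_
  filter_upwards [eventually_ne_atTop 0] with x hx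
  exact (Real.log_mul hc hx).symm

theorem tendsto_mul_log_atTop : Tendsto (fun x : ℝ => x * Real.log x) atTop atTop :=
  tendsto_id.atTop_mul_atTop₀ Real.tendsto_log_atTop

theorem mul_log_const_mul_sub_isEquivalent_mul_log {c : ℝ} (hc : c ≠ 0) (d : ℝ) :
    (fun x => x * Real.log (c * x) - d) ~[atTop] fun x => x * Real.log x := by
  have hmul : (fun x => x * Real.log (c * x)) ~[atTop] fun x => x * Real.log x :=
    IsEquivalent.refl.mul (log_const_mul_isEquivalent_log hc)
  have hconst : (fun _ => d) =o[atTop] fun x : ℝ => x * Real.log x :=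
    isLittleO_const_left.2 (.inr (tendsto_norm_atTop_atTop.comp tendsto_mul_log_atTop))
  exact hmul.sub_isLittleO hconst

theorem tendsto_log_one_add_div_pow (t : ℝ) :
    Tendsto (fun n : ℕ => Real.log ((1 + t / n) ^ n)) atTop (𝓝 t) := by
  simpa only [Real.log_exp] using
    (Real.tendsto_one_add_div_pow_exp t).log (Real.exp_ne_zero t)

theorem aSeq_eq_one_add_div_pow (n : ℕ) : aSeq n = (1 + -(1 / 2) / (n : ℝ)) ^ n := by
  rw [aSeq, neg_div, ← sub_eq_add_neg, div_div]

theorem tendsto_n_log_n_mul_eps :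
    Tendsto (fun n : ℕ => ((n : ℝ) * Real.log (n : ℝ)) * epsSeq n) atTop
      (nhds (Real.log 2 - 1 / 2)) := by
  have hnum : Tendsto (fun n => Real.log (aSeq n) + Real.log 2) atTop
      (𝓝 (Real.log 2 - 1 / 2)) := by
    simpa only [aSeq_eq_one_add_div_pow, neg_add_eq_sub] using
      (tendsto_log_one_add_div_pow (-(1 / 2))).add_const (Real.log 2)
  have hden : (fun n : ℕ => (n : ℝ) * Real.log (2 * n) - Real.log 2) ~[atTop]
      fun n : ℕ => (n : ℝ) * Real.log n :=
    (mul_log_const_mul_sub_isEquivalent_mul_log two_ne_zero (Real.log 2)).comp_tendsto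
      tendsto_natCast_atTop_atTop
  have hne : ∀ᶠ n : ℕ in atTop, (n : ℝ) * Real.log n ≠ 0 :=
    (tendsto_mul_log_atTop.comp tendsto_natCast_atTop_atTop).eventually_ne_atTop 0
  exact tendsto_mul_div_of_isEquivalent hden hne hnum
end

section
/- Let r ≥ 3, let ζ be a primitive 2^r-th root of unity, and let K = ℚ(ζ − ζ^{-1}), of degree n = 2^{r−2} over ℚ, with D_K the absolute value of its discriminant. Then M(K) ≤ √2 · e^{-1/4} · 2^{-n} · √(D_K). -/
open NumberField IntermediateField

/-!
Let `n = 2 ^ (r - 2)`, so that `ζ ^ (2n) = -1`, and let `F = ℚ(ζ)`. For the form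
`⟨x, y⟩ = ∑_φ φ(x) · conj φ(y)` the powers `ζ ^ j` with `j < 2n` are an orthogonal basis of `𝓞 F`
with `⟨ζ ^ j, ζ ^ j⟩ = 2n`: the matrix of their conjugates is square with orthogonal rows of equal
length, hence has orthogonal columns.

Put `α = ζ - ζ⁻¹` and let `L_k` be the Lucas polynomials, for which
`L_k(α) = ζ ^ k + (-ζ⁻¹) ^ k = ζ ^ k ± ζ ^ (2n - k)`. Hence `1, L_1(α), …, L_{n-1}(α)` are
orthogonal, and pairing an element of `K` with `ζ ^ j` for `j < n` reads off its `j`-th coordinate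
in this family, which is therefore a `ℤ`-basis of `𝓞 K`. As `[F : K] = 2`, its `T₂`-norms over `K`
are `n, 2n, …, 2n`, whence `D_K = 2 ^ (n - 1) · n ^ n`.

Rounding the coordinates of `x ∈ K` to the nearest integers gives `c ∈ 𝓞 K` with
`T₂(x - c) ≤ n (2n - 1) / 4`, and by the inequality of arithmetic and geometric means
`N(x - c)² ≤ ((2n - 1) / 4) ^ n = (1 - 1 / (2n)) ^ n (n / 2) ^ n ≤ e ^ (-1/2) (n / 2) ^ n`,
which is `2 e ^ (-1/2) 4 ^ (-n) D_K`.
-/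

open Module Polynomial
open scoped ComplexConjugate

section EmbeddingForm

/-- The form `⟨x, y⟩ = ∑_φ φ(x) · conj φ(y)` on a number field, the sum being over all embeddings
`φ : K → ℂ`, whose quadratic form is the `T₂`-norm. It is the restriction to `K` of a Hermitian form
on `K ⊗ ℂ`, encoded as a `ℚ`-bilinear map. -/
noncomputable def embeddingForm (K : Type*) [Field K] [NumberField K] : K →ₗ[ℚ] K →ₗ[ℚ] ℂ :=
  LinearMap.mk₂ ℚ (fun x y => ∑ φ : K →ₐ[ℚ] ℂ, φ x * conj (φ y))
    (by simp [add_mul, Finset.sum_add_distrib])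
    (by simp [Rat.smul_def, Finset.mul_sum, mul_assoc])
    (by simp [mul_add, Finset.sum_add_distrib])
    (by simp [Rat.smul_def, Finset.mul_sum, mul_left_comm])

/-- The `T₂`-norm `∑_φ |φ(x)|²` of an element of a number field, the sum being over all embeddings
`φ : K → ℂ`. -/
noncomputable def t2Norm {K : Type*} [Field K] [NumberField K] (x : K) : ℝ :=
  ∑ φ : K →ₐ[ℚ] ℂ, ‖φ x‖ ^ 2

variable {K : Type*} [Field K] [NumberField K]

theorem embeddingForm_apply (x y : K) :
    embeddingForm K x y = ∑ φ : K →ₐ[ℚ] ℂ, φ x * conj (φ y) := rfl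

theorem embeddingForm_self (x : K) : embeddingForm K x x = t2Norm x := by
  simp [embeddingForm_apply, t2Norm, Complex.mul_conj']

theorem t2Norm_nonneg (x : K) : 0 ≤ t2Norm x :=
  Finset.sum_nonneg fun _ _ => by positivity

theorem prod_le_sum_div_card_pow {ι : Type*} [Fintype ι] [Nonempty ι] {z : ι → ℝ}
    (hz : ∀ i, 0 ≤ z i) : ∏ i, z i ≤ ((∑ i, z i) / Fintype.card ι) ^ Fintype.card ι := by
  have h := Real.geom_mean_le_arith_mean Finset.univ (fun _ => 1) z (fun _ _ => zero_le_one)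
    (by simp [Fintype.card_pos]) (fun i _ => hz i)
  simp only [Real.rpow_one, Finset.sum_const, Finset.card_univ, nsmul_eq_mul, mul_one,
    one_mul] at h
  calc ∏ i, z i = ((∏ i, z i) ^ (Fintype.card ι : ℝ)⁻¹) ^ Fintype.card ι :=
        (Real.rpow_inv_natCast_pow (Finset.prod_nonneg fun i _ => hz i) Fintype.card_ne_zero).symm
    _ ≤ _ := by gcongr; exact Real.rpow_nonneg (Finset.prod_nonneg fun i _ => hz i) _

theorem abs_norm_sq_le_t2Norm_div_pow (x : K) :
    |((Algebra.norm ℚ x : ℚ) : ℝ)| ^ 2 ≤ (t2Norm x / finrank ℚ K) ^ finrank ℚ K := by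
  have hcard : Fintype.card (K →ₐ[ℚ] ℂ) = finrank ℚ K := AlgHom.card ℚ K ℂ
  have : Nonempty (K →ₐ[ℚ] ℂ) := Fintype.card_pos_iff.1 (hcard ▸ finrank_pos)
  have hnorm : |((Algebra.norm ℚ x : ℚ) : ℝ)| = ∏ φ : K →ₐ[ℚ] ℂ, ‖φ x‖ := by
    rw [← norm_prod, ← Algebra.norm_eq_prod_embeddings, eq_ratCast, Complex.norm_ratCast]
  rw [hnorm, ← Finset.prod_pow, ← hcard]
  exact prod_le_sum_div_card_pow fun φ => by positivity

theorem embeddingForm_algebraMap {F : Type*} [Field F] [NumberField F] [Algebra K F] (x y : K) :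
    embeddingForm F (algebraMap K F x) (algebraMap K F y) =
      finrank K F * embeddingForm K x y := by
  have : FiniteDimensional K F := FiniteDimensional.right ℚ K F
  have hfiber (φ : K →ₐ[ℚ] ℂ) :
      Fintype.card (@AlgHom K F ℂ _ _ _ _ φ.toRingHom.toAlgebra) = finrank K F := by
    let : Algebra K ℂ := φ.toRingHom.toAlgebra
    exact AlgHom.card K F ℂ
  calc embeddingForm F (algebraMap K F x) (algebraMap K F y)
      = ∑ ψ : Σ φ : K →ₐ[ℚ] ℂ, @AlgHom K F ℂ _ _ _ _ φ.toRingHom.toAlgebra,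
          ψ.1 x * conj (ψ.1 y) :=
        Fintype.sum_equiv (algHomEquivSigma (B := K)) _ _ fun _ => rfl
    _ = ∑ φ : K →ₐ[ℚ] ℂ, finrank K F * (φ x * conj (φ y)) := by
        simp_rw [Fintype.sum_sigma, Finset.sum_const, Finset.card_univ, hfiber, nsmul_eq_mul]
    _ = finrank K F * embeddingForm K x y := (Finset.mul_sum ..).symm

end EmbeddingForm

section OrthogonalIntegralBasis

variable {K ι : Type*} [Field K] [NumberField K] [Fintype ι] {b : Basis ι ℤ (𝓞 K)}

theorem abs_discr_eq_prod_t2Norm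
    (hb : (embeddingForm K).IsOrthoᵢ fun i => (b i : K)) :
    |(discr K : ℝ)| = ∏ i, t2Norm (b i : K) := by
  classical
  let bK := b.localizationLocalization ℚ (nonZeroDivisors ℤ) K
  have hbK : ∀ i, bK i = b i := b.localizationLocalization_apply ℚ (nonZeroDivisors ℤ) K
  have hcard : Fintype.card ι = Fintype.card (K →ₐ[ℚ] ℂ) := by
    rw [AlgHom.card, finrank_eq_card_basis bK]
  let V : Matrix ι ι ℂ := Algebra.embeddingsMatrixReindex ℚ ℂ bK (Fintype.equivOfCardEq hcard)
  have hdiscr : (discr K : ℂ) = V.det ^ 2 := by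
    rw [← Algebra.discr_eq_det_embeddingsMatrixReindex_pow_two,
      Algebra.discr_localizationLocalization, discr_eq_discr]
    simp
  have hgram : V * V.conjTranspose = Matrix.diagonal fun i => (t2Norm (b i : K) : ℂ) := by
    ext i j
    have hVV : (V * V.conjTranspose) i j = embeddingForm K (b i) (b j) := by
      rw [embeddingForm_apply, ← (Fintype.equivOfCardEq hcard).sum_comp]
      simp [Matrix.mul_apply, V, Algebra.embeddingsMatrixReindex, Algebra.embeddingsMatrix_apply,
        hbK]
    rw [hVV, Matrix.diagonal_apply]
    split_ifs with hij
    · rw [hij, embeddingForm_self]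
    · exact hb hij
  have hdet : (‖V.det‖ ^ 2 : ℂ) = ∏ i, (t2Norm (b i : K) : ℂ) := by
    rw [← Complex.mul_conj', starRingEnd_apply, ← Matrix.det_conjTranspose, ← Matrix.det_mul,
      hgram, Matrix.det_diagonal]
  rw [← Complex.norm_intCast, hdiscr, norm_pow]
  exact_mod_cast hdet

theorem t2Norm_sum_smul (hb : (embeddingForm K).IsOrthoᵢ fun i => (b i : K)) (q : ι → ℚ) :
    t2Norm (∑ i, q i • (b i : K)) = ∑ i, (q i : ℝ) ^ 2 * t2Norm (b i : K) := by
  apply Complex.ofReal_injective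
  rw [← embeddingForm_self]
  simp only [map_sum, LinearMap.sum_apply, map_smul, LinearMap.smul_apply, Complex.ofReal_sum,
    Complex.ofReal_mul, Complex.ofReal_pow, Complex.ofReal_ratCast]
  refine Finset.sum_congr rfl fun i _ => ?_
  rw [Finset.sum_eq_single i (fun j _ hji => by rw [hb hji, smul_zero])
    (by simp), embeddingForm_self, Rat.smul_def, Rat.smul_def, ← mul_assoc, sq]

theorem exists_t2Norm_sub_le (hb : (embeddingForm K).IsOrthoᵢ fun i => (b i : K)) (x : K) :
    ∃ c : 𝓞 K, t2Norm (x - c) ≤ (∑ i, t2Norm (b i : K)) / 4 := by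
  let bK := b.localizationLocalization ℚ (nonZeroDivisors ℤ) K
  have hbK : ∀ i, bK i = b i := b.localizationLocalization_apply ℚ (nonZeroDivisors ℤ) K
  let q : ι → ℚ := ⇑(bK.repr x)
  refine ⟨∑ i, round (q i) • b i, ?_⟩
  have hsub : x - ((∑ i, round (q i) • b i : 𝓞 K) : K) =
      ∑ i, (q i - round (q i)) • (b i : K) := by
    conv_lhs => rw [← bK.sum_repr x]
    simp [sub_smul, hbK, q, Rat.smul_def]
  have hround : ∀ i, ((q i - round (q i) : ℚ) : ℝ) ^ 2 ≤ 1 / 4 := fun i => by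
    have h : (q i - round (q i)) ^ 2 ≤ 1 / 4 := by
      rw [← sq_abs]
      nlinarith [abs_sub_round (q i), abs_nonneg (q i - round (q i))]
    simpa using (Rat.cast_le (K := ℝ)).2 h
  rw [hsub, t2Norm_sum_smul hb, Finset.sum_div]
  refine Finset.sum_le_sum fun i _ => ?_
  calc _ ≤ 1 / 4 * t2Norm (b i : K) := mul_le_mul_of_nonneg_right (hround i) (t2Norm_nonneg _)
    _ = t2Norm (b i : K) / 4 := by ring

theorem euclideanMinimum_le_sqrt_sum_t2Norm
    (hb : (embeddingForm K).IsOrthoᵢ fun i => (b i : K)) :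
    euclideanMinimum K ≤
      √(((∑ i, t2Norm (b i : K)) / 4 / finrank ℚ K) ^ finrank ℚ K) := by
  refine ciSup_le fun x => ?_
  obtain ⟨c, hc⟩ := exists_t2Norm_sub_le hb x
  refine (ciInf_le ⟨0, by rintro _ ⟨y, rfl⟩; positivity⟩ c).trans (Real.le_sqrt_of_sq_le ?_)
  refine (abs_norm_sq_le_t2Norm_div_pow _).trans ?_
  gcongr
  exact div_nonneg (t2Norm_nonneg _) (Nat.cast_nonneg _)

end OrthogonalIntegralBasis

section NegacyclicPowerBasis

theorem sum_pow_mul_conj_pow_of_pow_eq_neg_one {d : ℕ} {z w : ℂ} (hz : z ^ d = -1)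
    (hw : w ^ d = -1) :
    ∑ i : Fin d, z ^ (i : ℕ) * conj (w ^ (i : ℕ)) = if z = w then (d : ℂ) else 0 := by
  have hd : d ≠ 0 := by rintro rfl; norm_num at hz
  have hnorm : ‖w‖ = 1 := by
    rw [← pow_eq_one_iff_of_nonneg (norm_nonneg w) hd, ← norm_pow, hw, norm_neg, norm_one]
  have hconj : w * conj w = 1 := by simp [Complex.mul_conj', hnorm]
  simp_rw [map_pow, ← mul_pow]
  split_ifs with h
  · simp [h, hconj]
  · have hne : z * conj w ≠ 1 := fun h' =>
      h (mul_right_cancel₀ (right_ne_zero_of_mul_eq_one hconj) (h'.trans hconj.symm))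
    rw [Fin.sum_univ_eq_sum_range fun i => (z * conj w) ^ i, geom_sum_eq hne]
    simp [mul_pow, hz, ← map_pow, hw]

variable {F : Type*} [Field F] [NumberField F] {B : PowerBasis ℤ (𝓞 F)}

theorem algHom_ext_of_apply_gen_eq {L : Type*} [Field L] [Algebra ℚ L] {φ ψ : F →ₐ[ℚ] L}
    (h : φ B.gen = ψ B.gen) : φ = ψ := by
  refine AlgHom.coe_ringHom_injective (IsLocalization.ringHom_ext (nonZeroDivisors (𝓞 F)) ?_)
  exact RingHom.toIntAlgHom_injective (B.algHom_ext h)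

theorem embeddingForm_gen_pow_gen_pow (hB : B.gen ^ B.dim = -1) {i j : ℕ} (hi : i < B.dim)
    (hj : j < B.dim) :
    embeddingForm F ((B.gen : F) ^ i) ((B.gen : F) ^ j) =
      if i = j then (B.dim : ℂ) else 0 := by
  classical
  have hpow (φ : F →ₐ[ℚ] ℂ) : φ B.gen ^ B.dim = -1 := by
    simpa using congrArg (fun x : 𝓞 F => φ x) hB
  have hd : (B.dim : ℂ) ≠ 0 := Nat.cast_ne_zero.2 B.dim_pos.ne'
  have hcard : Fintype.card (Fin B.dim) = Fintype.card (F →ₐ[ℚ] ℂ) := by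
    rw [AlgHom.card, ← RingOfIntegers.rank, B.finrank, Fintype.card_fin]
  let e := Fintype.equivOfCardEq hcard
  let V : Matrix (Fin B.dim) (Fin B.dim) ℂ := .of fun k i => e k B.gen ^ (i : ℕ)
  have hV : V * ((B.dim : ℂ)⁻¹ • V.conjTranspose) = 1 := by
    ext k l
    have hkl : (V * V.conjTranspose) k l = if k = l then (B.dim : ℂ) else 0 := by
      have h := sum_pow_mul_conj_pow_of_pow_eq_neg_one (hpow (e k)) (hpow (e l))
      have hinj : e k B.gen = e l B.gen ↔ k = l :=
        ⟨fun h => e.injective (algHom_ext_of_apply_gen_eq h), fun h => h ▸ rfl⟩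
      simpa [Matrix.mul_apply, V, hinj] using h
    rw [Matrix.mul_smul, Matrix.smul_apply, hkl, Matrix.one_apply]
    split_ifs <;> simp [hd]
  have hV' : (V.conjTranspose * V) ⟨j, hj⟩ ⟨i, hi⟩ = if i = j then (B.dim : ℂ) else 0 := by
    have h := mul_eq_one_comm.1 hV
    rw [Matrix.smul_mul, inv_smul_eq_iff₀ hd] at h
    rw [h, Matrix.smul_apply, Matrix.one_apply]
    simp [eq_comm]
  rw [← hV', embeddingForm_apply, ← e.sum_comp]
  simp [Matrix.mul_apply, V, mul_comm]

theorem embeddingForm_gen_pow (hB : B.gen ^ B.dim = -1) (x : 𝓞 F) (j : Fin B.dim) :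
    embeddingForm F x ((B.gen : F) ^ (j : ℕ)) = B.dim * B.basis.repr x j := by
  have hx : (x : F) = ∑ i, (B.basis.repr x i : ℚ) • (B.gen : F) ^ (i : ℕ) := by
    conv_lhs => rw [← B.basis.sum_repr x]
    simp [Rat.smul_def]
  rw [hx]
  simp only [map_sum, map_smul, LinearMap.sum_apply, LinearMap.smul_apply]
  simp [embeddingForm_gen_pow_gen_pow hB (Fin.is_lt _) j.is_lt, Fin.val_inj, Rat.smul_def, mul_comm]

end NegacyclicPowerBasis

section MonicLucas

variable {R S : Type*} [CommRing R] [CommRing S]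

/-- The value at `a` of the `k`-th Lucas polynomial `L_k` (`L_0 = 2`, `L_1 = X`,
`L_{k+2} = X L_{k+1} + L_k`), with `L_0` replaced by `1` so that every polynomial of the sequence is
monic. The Lucas polynomials are the Dickson polynomials of the first kind with parameter `-1`. -/
noncomputable def monicLucas (a : R) (k : ℕ) : R :=
  if k = 0 then 1 else (dickson 1 (-1) k).eval a

theorem monicLucas_of_ne_zero (a : R) {k : ℕ} (hk : k ≠ 0) :
    monicLucas a k = (dickson 1 (-1) k).eval a :=
  if_neg hk

theorem map_monicLucas (f : R →+* S) (a : R) (k : ℕ) :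
    f (monicLucas a k) = monicLucas (f a) k := by
  have h := eval_map_apply f a (p := dickson 1 (-1) k)
  rw [map_dickson] at h
  simp only [monicLucas, apply_ite f, map_one, map_neg] at h ⊢
  rw [h]

theorem eval_dickson_one_mul_add (u v : R) (k : ℕ) :
    (dickson 1 (u * v) k).eval (u + v) = u ^ k + v ^ k := by
  induction k using Nat.twoStepInduction with
  | zero => norm_num
  | one => simp
  | more k h₀ h₁ =>
    simp only [dickson_add_two, eval_sub, eval_mul, eval_X, eval_C, h₀, h₁]
    ring

theorem adjoin_singleton_le_span_monicLucas {a : S} [Algebra R S] {n : ℕ} (hn : n ≠ 0)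
    (ha : monicLucas a n = 0) :
    Subalgebra.toSubmodule (Algebra.adjoin R {a}) ≤
      Submodule.span R (Set.range fun i : Fin n => monicLucas a i) := by
  set M := Submodule.span R (Set.range fun i : Fin n => monicLucas a i)
  have hgen {k : ℕ} (hk : k < n) : monicLucas a k ∈ M := Submodule.subset_span ⟨⟨k, hk⟩, rfl⟩
  have hone : (1 : S) ∈ M := hgen (Nat.pos_of_ne_zero hn)
  have hdickson {k : ℕ} (hk : k ≤ n) : (dickson 1 (-1) k).eval a ∈ M := by
    rcases hk.eq_or_lt with rfl | hk
    · exact monicLucas_of_ne_zero a hn ▸ ha ▸ M.zero_mem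
    rcases eq_or_ne k 0 with rfl | hk0
    · have hzero : (dickson 1 (-1) 0).eval a = 1 + 1 := by norm_num
      exact hzero ▸ M.add_mem hone hone
    · exact monicLucas_of_ne_zero a hk0 ▸ hgen hk
  have hstable : M ≤ M.comap (LinearMap.mulLeft R a) := by
    refine Submodule.span_le.2 ?_
    rintro _ ⟨⟨_ | k, hk⟩, rfl⟩
    · simpa [monicLucas] using hdickson (k := 1) hk
    · have hrec : a * monicLucas a (k + 1) =
          (dickson 1 (-1) (k + 2)).eval a - (dickson 1 (-1) k).eval a := by
        simp [monicLucas_of_ne_zero, dickson_add_two]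
      exact (hrec ▸ M.sub_mem (hdickson hk) (hdickson (by omega)) : _ ∈ M)
  rw [Algebra.adjoin_eq_span, ← Submonoid.powers_eq_closure, Submodule.span_le]
  rintro _ ⟨k, rfl⟩
  induction k with
  | zero => simpa using hone
  | succ k ih => exact (pow_succ' a k ▸ hstable ih : a ^ (k + 1) ∈ M)

end MonicLucas

section LucasIntegralBasis

theorem monicLucas_sub_inv {L : Type*} [Field L] {ζ : L} {n k : ℕ} (hζ : ζ ^ (2 * n) = -1)
    (hk0 : k ≠ 0) (hk : k ≤ 2 * n) :
    monicLucas (ζ - ζ⁻¹) k = ζ ^ k + ((-1) ^ (k + 1) : ℤ) • ζ ^ (2 * n - k) := by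
  have hζ0 : ζ ≠ 0 := by
    rintro rfl
    simp [show n ≠ 0 by omega] at hζ
  have hinv : (ζ ^ k)⁻¹ = -ζ ^ (2 * n - k) := by
    refine inv_eq_of_mul_eq_one_left ?_
    rw [neg_mul, ← pow_add, Nat.sub_add_cancel hk, hζ, neg_neg]
  rw [monicLucas_of_ne_zero _ hk0, sub_eq_add_neg,
    show (-1 : L) = ζ * -ζ⁻¹ by rw [mul_neg, mul_inv_cancel₀ hζ0], eval_dickson_one_mul_add,
    neg_pow, inv_pow, hinv, pow_succ]
  simp

theorem monicLucas_sub_inv_eq_zero {L : Type*} [Field L] {ζ : L} {n : ℕ} (hζ : ζ ^ (2 * n) = -1)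
    (hn : n ≠ 0) (hev : Even n) : monicLucas (ζ - ζ⁻¹) n = 0 := by
  rw [monicLucas_sub_inv hζ hn (by omega)]
  simp [hev.add_one.neg_one_pow, two_mul]

theorem gen_pow_two_mul_eq_neg_one {F : Type*} [Field F] {B : PowerBasis ℤ (𝓞 F)} {n : ℕ}
    (hdim : B.dim = 2 * n) (hB : B.gen ^ B.dim = -1) : (B.gen : F) ^ (2 * n) = -1 := by
  simpa [hdim] using congrArg (algebraMap (𝓞 F) F) hB

variable {K F : Type*} [Field K] [NumberField K] [Field F] [NumberField F] [Algebra K F]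
  {B : PowerBasis ℤ (𝓞 F)} {n : ℕ} {a : 𝓞 K}

theorem embeddingForm_monicLucas_gen_pow (hdim : B.dim = 2 * n) (hB : B.gen ^ B.dim = -1)
    {i j : ℕ} (hi : i < n) (hj : j < 2 * n) :
    embeddingForm F (monicLucas (B.gen - (B.gen : F)⁻¹) i) ((B.gen : F) ^ j) =
      if i = j then (2 * n : ℂ) else if 2 * n - i = j then (-1) ^ (i + 1) * (2 * n) else 0 := by
  have hζ : (B.gen : F) ^ (2 * n) = -1 := gen_pow_two_mul_eq_neg_one hdim hB
  rcases eq_or_ne i 0 with rfl | hi0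
  · have h := embeddingForm_gen_pow_gen_pow hB B.dim_pos (hdim ▸ hj)
    simpa [monicLucas, hdim, hj.ne'] using h
  · rw [monicLucas_sub_inv hζ hi0 (by omega), map_add, map_zsmul, LinearMap.add_apply,
      LinearMap.smul_apply, embeddingForm_gen_pow_gen_pow hB (by omega) (by omega),
      embeddingForm_gen_pow_gen_pow hB (by omega) (by omega)]
    split_ifs with hij hij'
    · omega
    all_goals simp [hdim]

theorem embeddingForm_monicLucas (hdim : B.dim = 2 * n) (hB : B.gen ^ B.dim = -1)
    {i j : ℕ} (hi : i < n) (hj : j < n) :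
    embeddingForm F (monicLucas (B.gen - (B.gen : F)⁻¹) i)
        (monicLucas (B.gen - (B.gen : F)⁻¹) j) =
      if i = j then (if i = 0 then 1 else 2) * (2 * n : ℂ) else 0 := by
  have hζ : (B.gen : F) ^ (2 * n) = -1 := gen_pow_two_mul_eq_neg_one hdim hB
  rcases eq_or_ne j 0 with rfl | hj0
  · have h := embeddingForm_monicLucas_gen_pow hdim hB hi (j := 0) (by omega)
    simpa +contextual [monicLucas, show 2 * n - i ≠ 0 by omega] using h
  · rw [monicLucas_sub_inv hζ hj0 (by omega), map_add, map_zsmul,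
      embeddingForm_monicLucas_gen_pow hdim hB hi (by omega),
      embeddingForm_monicLucas_gen_pow hdim hB hi (by omega),
      if_neg (show 2 * n - i ≠ j by omega), if_neg (show i ≠ 2 * n - j by omega)]
    rcases eq_or_ne i j with rfl | hij
    · simp [hj0, ← mul_assoc, ← mul_pow, two_mul]
    · simp [hij, show 2 * n - i ≠ 2 * n - j by omega]

theorem embeddingForm_sum_smul_monicLucas_gen_pow (hdim : B.dim = 2 * n)
    (hB : B.gen ^ B.dim = -1) (ha : algebraMap K F a = B.gen - (B.gen : F)⁻¹) (q : Fin n → ℚ)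
    (j : Fin n) :
    embeddingForm F (algebraMap K F (∑ i, q i • monicLucas (a : K) i)) ((B.gen : F) ^ (j : ℕ)) =
      B.dim * q j := by
  have hterm (i : Fin n) : embeddingForm F (algebraMap K F (q i • monicLucas (a : K) i))
      ((B.gen : F) ^ (j : ℕ)) = if i = j then (B.dim : ℂ) * q i else 0 := by
    rw [map_rat_smul (algebraMap K F), map_monicLucas, ha, map_smul, LinearMap.smul_apply,
      embeddingForm_monicLucas_gen_pow hdim hB i.is_lt (by omega),
      if_neg (show 2 * n - i ≠ j by omega)]
    simp [hdim, Fin.val_inj, Rat.smul_def, mul_comm]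
  simp_rw [map_sum, LinearMap.sum_apply, hterm]
  simp

theorem coe_sum_smul_monicLucas (m : Fin n → ℤ) :
    ((∑ i, m i • monicLucas a i : 𝓞 K) : K) = ∑ i, (m i : ℚ) • monicLucas (a : K) i := by
  simp [map_monicLucas (algebraMap (𝓞 K) K), Rat.smul_def]

theorem exists_basis_eq_monicLucas (hdim : B.dim = 2 * n) (hB : B.gen ^ B.dim = -1)
    (hn : n ≠ 0) (hev : Even n) (ha : algebraMap K F a = B.gen - (B.gen : F)⁻¹)
    (hgen : Algebra.adjoin ℚ {(a : K)} = ⊤) :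
    ∃ b : Basis (Fin n) ℤ (𝓞 K), ∀ i, b i = monicLucas a i := by
  have hdim0 : (B.dim : ℂ) ≠ 0 := Nat.cast_ne_zero.2 B.dim_pos.ne'
  have hcoord := embeddingForm_sum_smul_monicLucas_gen_pow hdim hB ha
  have hli : LinearIndependent ℤ fun i : Fin n => monicLucas a i := by
    refine Fintype.linearIndependent_iff.2 fun m hm j => ?_
    have h := hcoord (fun i => m i) j
    rw [← coe_sum_smul_monicLucas, hm] at h
    simpa [hdim0] using h
  have hspan : ⊤ ≤ Submodule.span ℤ (Set.range fun i : Fin n => monicLucas a i) := fun x _ => by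
    have hLn : monicLucas (a : K) n = 0 := (algebraMap K F).injective <| by
      rw [map_monicLucas, ha, map_zero,
        monicLucas_sub_inv_eq_zero (gen_pow_two_mul_eq_neg_one hdim hB) hn hev]
    have hx : (x : K) ∈ Submodule.span ℚ (Set.range fun i : Fin n => monicLucas (a : K) i) :=
      adjoin_singleton_le_span_monicLucas hn hLn (by simp [hgen])
    obtain ⟨q, hq⟩ := (Submodule.mem_span_range_iff_exists_fun ℚ).1 hx
    have hint (j : Fin n) : ∃ m : ℤ, q j = m := by
      let m := B.basis.repr (algebraMap (𝓞 K) (𝓞 F) x) ⟨j, by omega⟩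
      have h : embeddingForm F (algebraMap K F x) ((B.gen : F) ^ (j : ℕ)) = B.dim * m :=
        embeddingForm_gen_pow hB (algebraMap (𝓞 K) (𝓞 F) x) ⟨j, by omega⟩
      rw [← hq, hcoord] at h
      exact ⟨m, by exact_mod_cast mul_left_cancel₀ hdim0 h⟩
    choose m hm using hint
    refine (Submodule.mem_span_range_iff_exists_fun ℤ).2 ⟨m, RingOfIntegers.coe_injective ?_⟩
    simp_rw [coe_sum_smul_monicLucas, ← hm, hq]
  exact ⟨Basis.mk hli hspan, fun i => Basis.mk_apply hli hspan i⟩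

theorem embeddingForm_basis_monicLucas {b : Basis (Fin n) ℤ (𝓞 K)} (hdim : B.dim = 2 * n)
    (hB : B.gen ^ B.dim = -1) (ha : algebraMap K F a = B.gen - (B.gen : F)⁻¹)
    (hb : ∀ i, b i = monicLucas a i) (i j : Fin n) :
    embeddingForm K (b i) (b j) =
      if i = j then (if (i : ℕ) = 0 then 1 else 2) * (n : ℂ) else 0 := by
  have hfinrank : finrank K F = 2 := by
    have h := finrank_mul_finrank ℚ K F
    rw [← RingOfIntegers.rank F, B.finrank, hdim, ← RingOfIntegers.rank, finrank_eq_card_basis b,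
      Fintype.card_fin, mul_comm] at h
    exact Nat.eq_of_mul_eq_mul_right i.pos h
  have hcoe (i : Fin n) : algebraMap K F (b i) = monicLucas (B.gen - (B.gen : F)⁻¹) i := by
    rw [hb, ← ha, ← map_monicLucas (algebraMap K F), ← map_monicLucas (algebraMap (𝓞 K) K)]
  have h := embeddingForm_algebraMap (F := F) (b i : K) (b j)
  rw [hcoe, hcoe, embeddingForm_monicLucas hdim hB i.is_lt j.is_lt, hfinrank, Nat.cast_two] at h
  refine mul_left_cancel₀ (two_ne_zero' ℂ) (h.symm.trans ?_)
  simp only [Fin.val_inj]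
  split_ifs <;> ring

end LucasIntegralBasis

section Bound

theorem sum_fin_ite_eq_zero_one_two {n : ℕ} (hn : n ≠ 0) :
    ∑ i : Fin n, (if (i : ℕ) = 0 then 1 else 2 : ℝ) = 2 * n - 1 := by
  obtain ⟨k, rfl⟩ := Nat.exists_eq_succ_of_ne_zero hn
  simp only [Nat.succ_eq_add_one, Fin.val_eq_zero_iff, Fin.sum_univ_succ, ↓reduceIte,
    Fin.succ_ne_zero, Finset.sum_const, Finset.card_univ, Fintype.card_fin, nsmul_eq_mul,
    Nat.cast_add_one]
  ring

theorem prod_fin_ite_eq_zero_one_two (n : ℕ) :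
    ∏ i : Fin n, (if (i : ℕ) = 0 then 1 else 2 : ℝ) = 2 ^ (n - 1) := by
  cases n <;> simp [Fin.prod_univ_succ]

theorem sqrt_two_mul_sub_one_div_four_pow_le {n : ℕ} (hn : n ≠ 0) :
    √(((2 * n - 1) / 4 : ℝ) ^ n) ≤
      √2 * Real.exp (-(1 / 4)) * (2 : ℝ)⁻¹ ^ n * √(2 ^ (n - 1) * (n : ℝ) ^ n) := by
  have hn1 : (1 : ℝ) ≤ n := by exact_mod_cast Nat.one_le_iff_ne_zero.2 hn
  have hexp : Real.exp (-(1 / 4)) ^ 2 = Real.exp (-(1 / 2)) := by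
    rw [← Real.exp_nat_mul]
    norm_num
  have htwo : (2 : ℝ) * 2 ^ (n - 1) = 2 ^ n := mul_pow_sub_one hn 2
  refine Real.sqrt_le_iff.2 ⟨by positivity, ?_⟩
  calc ((2 * n - 1) / 4 : ℝ) ^ n = (1 - 1 / 2 / n) ^ n * (n / 2) ^ n := by
        rw [← mul_pow]
        field_simp
        ring
    _ ≤ Real.exp (-(1 / 2)) * (n / 2) ^ n := by
        gcongr
        exact Real.one_sub_div_pow_le_exp_neg (by linarith)
    _ = 2 * 2 ^ (n - 1) * Real.exp (-(1 / 4)) ^ 2 * ((2 : ℝ)⁻¹ ^ n) ^ 2 * (n : ℝ) ^ n := by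
        rw [htwo, hexp, div_pow, inv_pow]
        field_simp
    _ = (√2 * Real.exp (-(1 / 4)) * (2 : ℝ)⁻¹ ^ n * √(2 ^ (n - 1) * (n : ℝ) ^ n)) ^ 2 := by
        rw [mul_pow _ (√_), Real.sq_sqrt (by positivity), mul_pow, mul_pow,
          Real.sq_sqrt zero_le_two]
        ring

theorem euclideanMinimum_le_of_gen_pow_dim_eq_neg_one {K F : Type*} [Field K] [NumberField K]
    [Field F] [NumberField F] [Algebra K F] {B : PowerBasis ℤ (𝓞 F)} {n : ℕ} {a : 𝓞 K}
    (hdim : B.dim = 2 * n) (hB : B.gen ^ B.dim = -1) (hev : Even n)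
    (ha : algebraMap K F a = B.gen - (B.gen : F)⁻¹) (hgen : Algebra.adjoin ℚ {(a : K)} = ⊤) :
    euclideanMinimum K ≤
      √2 * Real.exp (-(1 / 4)) * (2 : ℝ)⁻¹ ^ n * √|(discr K : ℝ)| := by
  have hn : n ≠ 0 := by
    have := B.dim_pos
    omega
  obtain ⟨b, hb⟩ := exists_basis_eq_monicLucas hdim hB hn hev ha hgen
  have hform := embeddingForm_basis_monicLucas hdim hB ha hb
  have hortho : (embeddingForm K).IsOrthoᵢ fun i => (b i : K) := fun i j hij =>
    (hform i j).trans (if_neg hij)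
  have ht2 (i : Fin n) : t2Norm (b i : K) = (if (i : ℕ) = 0 then 1 else 2) * n := by
    have h := hform i i
    rw [embeddingForm_self, if_pos rfl] at h
    split_ifs at h ⊢ <;> exact_mod_cast h
  have hfinrank : finrank ℚ K = n := by
    rw [← RingOfIntegers.rank, finrank_eq_card_basis b, Fintype.card_fin]
  have hsum : ∑ i, t2Norm (b i : K) = (2 * n - 1) * n := by
    simp_rw [ht2, ← Finset.sum_mul, sum_fin_ite_eq_zero_one_two hn]
  have hdiscr : |(discr K : ℝ)| = 2 ^ (n - 1) * (n : ℝ) ^ n := by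
    simp_rw [abs_discr_eq_prod_t2Norm hortho, ht2, Finset.prod_mul_distrib,
      prod_fin_ite_eq_zero_one_two, Finset.prod_const, Finset.card_univ, Fintype.card_fin]
  calc euclideanMinimum K
      ≤ √(((∑ i, t2Norm (b i : K)) / 4 / finrank ℚ K) ^ finrank ℚ K) :=
        euclideanMinimum_le_sqrt_sum_t2Norm hortho
    _ = √(((2 * n - 1) / 4) ^ n) := by
        rw [hsum, hfinrank, div_right_comm, mul_div_cancel_right₀ _ (by positivity)]
    _ ≤ _ := hdiscr ▸ sqrt_two_mul_sub_one_div_four_pow_le hn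

end Bound

theorem euclideanMinimum_le_of_algebraMap_eq_zeta_sub_inv {K F : Type*} [Field K] [NumberField K]
    [Field F] [NumberField F] [Algebra K F] {r : ℕ} (hr : 3 ≤ r)
    [IsCyclotomicExtension {2 ^ r} ℚ F] {ζ : F} (hζ : IsPrimitiveRoot ζ (2 ^ r)) {α : K}
    (hα : algebraMap K F α = ζ - ζ⁻¹) (hgen : Algebra.adjoin ℚ {α} = ⊤) :
    euclideanMinimum K ≤
      √2 * Real.exp (-(1 / 4)) * (2 : ℝ)⁻¹ ^ (2 ^ (r - 2)) * √|(discr K : ℝ)| := by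
  have hint : IsIntegral ℤ α := by
    rw [← isIntegral_algebraMap_iff (algebraMap K F).injective, hα]
    exact (hζ.isIntegral (by positivity)).sub (hζ.inv.isIntegral (by positivity))
  have hpow : 2 * 2 ^ (r - 2) = 2 ^ (r - 1) := by
    rw [← pow_succ']
    congr 1
    omega
  have hdim : hζ.integralPowerBasis.dim = 2 ^ (r - 1) := by
    rw [hζ.integralPowerBasis_dim, Nat.totient_prime_pow Nat.prime_two (by omega)]
    simp
  have hneg : ζ ^ 2 ^ (r - 1) = -1 :=
    (hζ.pow (by positivity) (pow_sub_one_mul (by omega) 2).symm).eq_neg_one_of_two_right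
  refine euclideanMinimum_le_of_gen_pow_dim_eq_neg_one (B := hζ.integralPowerBasis) (a := ⟨α, hint⟩)
    (hdim.trans hpow.symm) ?_ (even_two.pow_of_ne_zero (by omega)) ?_ hgen
  · rw [hdim, hζ.integralPowerBasis_gen]
    exact RingOfIntegers.coe_injective (by rw [map_pow, map_neg, map_one]; exact hneg)
  · rw [hζ.integralPowerBasis_gen]
    exact hα

theorem euclideanMinimum_adjoin_zeta_sub_zeta_inv_le'_general {L : Type*} [Field L] [CharZero L]
    {r : ℕ} (hr : 3 ≤ r) {ζ : L} (hζ : IsPrimitiveRoot ζ (2 ^ r)) [NumberField ℚ⟮ζ - ζ⁻¹⟯] :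
    euclideanMinimum ℚ⟮ζ - ζ⁻¹⟯ ≤
      √2 * Real.exp (-(1 / 4)) * (2 : ℝ)⁻¹ ^ (2 ^ (r - 2)) * √|(discr ℚ⟮ζ - ζ⁻¹⟯ : ℝ)| := by
  have hle : ℚ⟮ζ - ζ⁻¹⟯ ≤ ℚ⟮ζ⟯ := adjoin_simple_le_iff.2 <|
    sub_mem (mem_adjoin_simple_self ℚ ζ) (inv_mem (mem_adjoin_simple_self ℚ ζ))
  let : Algebra ℚ⟮ζ - ζ⁻¹⟯ ℚ⟮ζ⟯ := (IntermediateField.inclusion hle).toRingHom.toAlgebra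
  have : IsCyclotomicExtension {2 ^ r} ℚ ℚ⟮ζ⟯ :=
    (isCyclotomicExtension_singleton_iff_eq_adjoin (2 ^ r) ℚ L ℚ⟮ζ⟯ hζ).2 rfl
  have : NumberField ℚ⟮ζ⟯ := IsCyclotomicExtension.numberField {2 ^ r} ℚ ℚ⟮ζ⟯
  have hint : IsIntegral ℚ (ζ - ζ⁻¹) :=
    (hζ.isIntegral (by positivity)).tower_top.sub (hζ.inv.isIntegral (by positivity)).tower_top
  exact euclideanMinimum_le_of_algebraMap_eq_zeta_sub_inv hr
    (ζ := AdjoinSimple.gen ℚ ζ) (α := AdjoinSimple.gen ℚ (ζ - ζ⁻¹))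
    (IsPrimitiveRoot.coe_submonoidClass_iff.1 hζ) rfl (adjoin.powerBasis hint).adjoin_gen_eq_top

theorem euclideanMinimum_adjoin_zeta_sub_zeta_inv_le'
    (r : ℕ) (hr : 3 ≤ r) (ζ : ℂ) (hζ : IsPrimitiveRoot ζ (2 ^ r))
    [NumberField ℚ⟮ζ - ζ⁻¹⟯] :
    euclideanMinimum ℚ⟮ζ - ζ⁻¹⟯ ≤
      Real.sqrt 2 * Real.exp (-(1 / 4)) * (2 : ℝ)⁻¹ ^ (2 ^ (r - 2)) *
        Real.sqrt |(NumberField.discr ℚ⟮ζ - ζ⁻¹⟯ : ℝ)| :=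
  euclideanMinimum_adjoin_zeta_sub_zeta_inv_le'_general hr hζ
end

section
/- Let r ≥ 3, let ζ be a primitive 2^r-th root of unity, and let K = ℚ(ζ − ζ^{-1}), of degree n = 2^{r−2} over ℚ. Then the absolute value of the discriminant of K is D_K = n^n · 2^{n−1}. -/
open NumberField IntermediateField

/-!
Put `n = 2 ^ (r - 2)`. Then `ζ - ζ⁻¹` is a root of the Lucas polynomial `L_n`, since
`L_n (z - z⁻¹) = z ^ n + z ^ (-n)` for even `n` and `ζ ^ n` is a primitive fourth root of unity.
As `L_n` is Eisenstein at `2`, it is the minimal polynomial, and as its discriminant is up to sign a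
power of `2`, the ring of integers is `ℤ[ζ - ζ⁻¹]` and `D_K = |disc L_n|`. The recursion
`L_{2m} = L_m ^ 2 - 2` makes this discriminant computable: it gives
`L_n' = n X ∏ L_{2 ^ i}`, the product being over `2 ≤ 2 ^ i < n`, and `L_n ≡ ± 2` modulo each of
these factors, so that `Res(L_n, L_n')` is a product of resultants with constants.
-/

open Polynomial

section Resultant

variable {R : Type*} [CommRing R]

theorem resultant_eq_of_dvd_sub_C {f g : R[X]} {r : R} (hg : g.Monic) (h : g ∣ f - C r) :
    resultant f g = (-1) ^ (f.natDegree * g.natDegree) * r ^ g.natDegree := by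
  obtain ⟨p, hp⟩ := h
  obtain rfl : f = C r + g * p := by rw [← hp]; ring
  obtain rfl | hp0 := eq_or_ne p 0
  · simp
  have hdeg : p.natDegree + g.natDegree ≤ (C r + g * p).natDegree := by
    rw [natDegree_C_add, hg.natDegree_mul' hp0, add_comm]
  rw [resultant_add_mul_left _ _ _ _ _ hdeg le_rfl, resultant_C_left, hg.coeff_natDegree,
    one_pow, mul_one]

theorem discr_map_of_monic {S : Type*} [CommRing S] [Nontrivial S] (φ : R →+* S) {f : R[X]}
    (hf : f.Monic) : (f.map φ).discr = φ f.discr := by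
  obtain hdeg | hdeg := Nat.eq_zero_or_pos f.natDegree
  · rw [hf.natDegree_eq_zero.1 hdeg, Polynomial.map_one, ← C_1, ← C_1, discr_C, discr_C, map_one]
  have hdeg' : (f.map φ).natDegree = f.natDegree := hf.natDegree_map φ
  have hres := resultant_map_map f (derivative f) f.natDegree (f.natDegree - 1) φ
  rw [← derivative_map, resultant_deriv (natDegree_pos_iff_degree_pos.1 hdeg)] at hres
  have hres' := resultant_deriv (f := f.map φ) (natDegree_pos_iff_degree_pos.1 (hdeg' ▸ hdeg))
  rw [hdeg', hres, hf.leadingCoeff, (hf.map φ).leadingCoeff] at hres'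
  simpa only [map_mul, map_pow, map_neg, map_one, mul_one,
    ((isUnit_neg_one (α := S)).pow _).mul_right_inj] using hres'.symm

theorem natAbs_discr_eq_natAbs_resultant_derivative {f : ℤ[X]} (hf : f.Monic)
    (hdeg : f.natDegree ≠ 0) : f.discr.natAbs = (resultant f (derivative f)).natAbs := by
  rw [natDegree_eq_of_degree_eq_some (degree_derivative hdeg),
    resultant_deriv (natDegree_pos_iff_degree_pos.1 hdeg.pos), hf.leadingCoeff, mul_one,
    Int.natAbs_mul, Int.natAbs_pow, Int.natAbs_neg, Int.natAbs_one, one_pow, one_mul]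

end Resultant

section PowerBasis

variable {F K : Type*} [Field F] [Field K] [Algebra F K] [Algebra.IsSeparable F K]

theorem norm_aeval_gen_eq_resultant_minpoly (B : PowerBasis F K) {q : F[X]} {n : ℕ}
    (hq : q.natDegree ≤ n) :
    Algebra.norm F (aeval B.gen q) = resultant (minpoly F B.gen) q B.dim n := by
  classical
  let E := AlgebraicClosure F
  have hmonic := minpoly.monic B.isIntegral_gen
  have : FiniteDimensional F K := B.finite
  apply (algebraMap F E).injective
  have hdim : B.dim = ((minpoly F B.gen).map (algebraMap F E)).natDegree := by
    rw [hmonic.natDegree_map, B.natDegree_minpoly]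
  have hroots : ((minpoly F B.gen).aroots E).Nodup :=
    nodup_roots (.map (Algebra.IsSeparable.isSeparable F B.gen))
  rw [← resultant_map_map, hdim, resultant_eq_prod_eval _ _ _ (natDegree_map_le.trans hq)
    (IsAlgClosed.splits _), (hmonic.map _).leadingCoeff, one_pow, one_mul,
    Algebra.norm_eq_prod_embeddings F E,
    Fintype.prod_equiv B.liftEquiv' _ (fun x ↦ (q.map (algebraMap F E)).eval x.1),
    Finset.prod_mem_multiset _ _ (fun x ↦ (q.map (algebraMap F E)).eval x) (fun _ ↦ rfl),
    Finset.prod_eq_multiset_prod, Multiset.toFinset_val, hroots.dedup]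
  intro σ
  rw [PowerBasis.liftEquiv'_apply_coe, eval_map_algebraMap, aeval_algHom_apply]

theorem discr_powerBasis_eq_discr_minpoly (B : PowerBasis F K) :
    Algebra.discr F B.basis = (minpoly F B.gen).discr := by
  have : FiniteDimensional F K := B.finite
  have hdeg := minpoly.natDegree_pos B.isIntegral_gen
  rw [Algebra.discr_powerBasis_eq_norm,
    norm_aeval_gen_eq_resultant_minpoly B (natDegree_derivative_le _), ← B.natDegree_minpoly,
    resultant_deriv (natDegree_pos_iff_degree_pos.1 hdeg),
    (minpoly.monic B.isIntegral_gen).leadingCoeff, B.natDegree_minpoly, B.finrank, mul_one,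
    ← mul_assoc, ← mul_pow, neg_one_mul, neg_neg, one_pow, one_mul]

end PowerBasis

section

variable {R F A : Type*} [CommRing R] [CommRing F] [CommRing A] [Algebra R F] [Algebra R A]
  [Algebra F A] [IsScalarTower R F A]

theorem isIntegral_repr_of_mem_adjoin_gen {B : PowerBasis F A} (hint : IsIntegral R B.gen)
    (hmin : minpoly F B.gen = (minpoly R B.gen).map (algebraMap R F)) {z : A}
    (hz : z ∈ Algebra.adjoin R {B.gen}) (i : Fin B.dim) : IsIntegral R (B.basis.repr z i) := by
  rw [Algebra.adjoin_singleton_eq_range_aeval] at hz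
  obtain ⟨P, rfl⟩ := hz
  rw [AlgHom.toRingHom_eq_coe, RingHom.coe_coe, aeval_eq_sum_range, map_sum, Finset.sum_apply']
  refine IsIntegral.sum _ fun n _ ↦ ?_
  rw [← algebraMap_smul F, map_smul, Finsupp.smul_apply, algebraMap_smul]
  exact (PowerBasis.repr_gen_pow_isIntegral hint hmin _ _).smul _

end

section NumberField

variable {K : Type*} [Field K] [NumberField K] {B : PowerBasis ℚ K}

theorem discr_eq_discr_powerBasis_of_integralClosure_le_adjoin (hint : IsIntegral ℤ B.gen)
    (hadj : integralClosure ℤ K ≤ Algebra.adjoin ℤ {B.gen}) :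
    (NumberField.discr K : ℚ) = Algebra.discr ℚ B.basis := by
  rw [coe_discr]
  apply Algebra.discr_eq_discr_of_toMatrix_coeff_isIntegral
  · intro i j
    rw [Module.Basis.toMatrix_apply, B.coe_basis]
    exact integralBasis_repr_apply K ⟨B.gen ^ (j : ℕ), hint.pow _⟩ i ▸ isIntegral_algebraMap
  · intro i j
    rw [Module.Basis.toMatrix_apply, integralBasis_apply]
    exact isIntegral_repr_of_mem_adjoin_gen hint
      (minpoly.isIntegrallyClosed_eq_field_fractions' ℚ hint)
      (hadj (RingOfIntegers.isIntegral_coe _)) i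

theorem discr_powerBasis_eq_discr_minpoly_int (hint : IsIntegral ℤ B.gen) :
    Algebra.discr ℚ B.basis = (minpoly ℤ B.gen).discr := by
  rw [discr_powerBasis_eq_discr_minpoly, minpoly.isIntegrallyClosed_eq_field_fractions' ℚ hint,
    discr_map_of_monic _ (minpoly.monic hint), eq_intCast]

theorem integralClosure_le_adjoin_of_isEisensteinAt (hint : IsIntegral ℤ B.gen) {p m : ℕ}
    (hp : p.Prime) (hE : (minpoly ℤ B.gen).IsEisensteinAt (Submodule.span ℤ {(p : ℤ)}))
    (hdiscr : (minpoly ℤ B.gen).discr.natAbs = p ^ m) :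
    integralClosure ℤ K ≤ Algebra.adjoin ℤ {B.gen} := by
  intro z hz
  refine mem_adjoin_of_smul_prime_pow_smul_of_minpoly_isEisensteinAt (K := ℚ)
    (Nat.prime_iff_prime_int.1 hp) hint hz (n := m) ?_ hE
  have hmem := Algebra.discr_mul_isIntegral_mem_adjoin ℚ hint hz
  rw [discr_powerBasis_eq_discr_minpoly_int hint, Int.cast_smul_eq_zsmul] at hmem
  obtain ⟨c, hc⟩ : (minpoly ℤ B.gen).discr ∣ (p : ℤ) ^ m := by
    rw [← Int.natAbs_dvd, hdiscr, Nat.cast_pow]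
  rw [hc, mul_comm, mul_smul]
  exact Subalgebra.smul_mem _ hmem c

theorem discr_eq_discr_minpoly_of_isEisensteinAt (hint : IsIntegral ℤ B.gen) {p m : ℕ}
    (hp : p.Prime) (hE : (minpoly ℤ B.gen).IsEisensteinAt (Submodule.span ℤ {(p : ℤ)}))
    (hdiscr : (minpoly ℤ B.gen).discr.natAbs = p ^ m) :
    NumberField.discr K = (minpoly ℤ B.gen).discr := by
  have h := discr_eq_discr_powerBasis_of_integralClosure_le_adjoin hint
    (integralClosure_le_adjoin_of_isEisensteinAt hint hp hE hdiscr)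
  rw [discr_powerBasis_eq_discr_minpoly_int hint] at h
  exact_mod_cast h

end NumberField

/-- The Lucas polynomial `L_n` of index `n = 2 ^ (k + 1)`, which satisfies
`L_n (x - x⁻¹) = x ^ n + x⁻¹ ^ n`. It is encoded by `L_2 = X ^ 2 + 2` and the duplication formula
`L_{2m} = L_m ^ 2 - 2` (valid for even `m`). -/
noncomputable def lucasTwoPow : ℕ → ℤ[X]
  | 0 => X ^ 2 + 2
  | k + 1 => lucasTwoPow k ^ 2 - 2

namespace lucasTwoPow

theorem monic_and_natDegree_eq (k : ℕ) :
    (lucasTwoPow k).Monic ∧ (lucasTwoPow k).natDegree = 2 ^ (k + 1) := by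
  induction k with
  | zero =>
    rw [lucasTwoPow, ← C_ofNat]
    exact ⟨monic_X_pow_add_C 2 two_ne_zero, natDegree_X_pow_add_C⟩
  | succ k ih =>
    obtain ⟨hmonic, hdeg⟩ := ih
    have hsq : (lucasTwoPow k ^ 2).natDegree = 2 ^ (k + 2) := by
      rw [hmonic.natDegree_pow, hdeg, mul_comm, ← pow_succ]
    rw [lucasTwoPow, ← C_ofNat, natDegree_sub_C]
    refine ⟨(hmonic.pow 2).sub_of_left (degree_C_le.trans_lt ?_), hsq⟩
    exact natDegree_pos_iff_degree_pos.1 (hsq ▸ by positivity)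

theorem monic (k : ℕ) : (lucasTwoPow k).Monic := (monic_and_natDegree_eq k).1

theorem natDegree_eq (k : ℕ) : (lucasTwoPow k).natDegree = 2 ^ (k + 1) :=
  (monic_and_natDegree_eq k).2

theorem eval_zero (k : ℕ) : (lucasTwoPow k).eval 0 = 2 := by
  induction k with
  | zero => simp [lucasTwoPow]
  | succ k ih => simp [lucasTwoPow, ih]

theorem map_zmod_two (k : ℕ) :
    (lucasTwoPow k).map (Int.castRingHom (ZMod 2)) = X ^ 2 ^ (k + 1) := by
  have two_eq_zero : (2 : (ZMod 2)[X]) = 0 := CharTwo.two_eq_zero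
  induction k with
  | zero => simp [lucasTwoPow, two_eq_zero]
  | succ k ih => simp [lucasTwoPow, ih, two_eq_zero, ← pow_mul, ← pow_succ]

theorem isEisensteinAt_two (k : ℕ) :
    (lucasTwoPow k).IsEisensteinAt (Submodule.span ℤ {((2 : ℕ) : ℤ)}) := by
  refine (monic k).isEisensteinAt_of_mem_of_notMem
    (Ideal.isPrime_span_singleton_of_prime Int.prime_two).ne_top (fun {i} hi ↦ ?_) ?_
  · have hcoeff := congrArg (coeff · i) (map_zmod_two k)
    simp only [coeff_map, coeff_X_pow, ← natDegree_eq k, if_neg hi.ne] at hcoeff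
    exact Ideal.mem_span_singleton.2 ((ZMod.intCast_zmod_eq_zero_iff_dvd _ 2).1 hcoeff)
  · rw [coeff_zero_eq_eval_zero, eval_zero, Ideal.submodule_span_eq, Ideal.span_singleton_pow,
      Ideal.mem_span_singleton]
    norm_num

theorem irreducible (k : ℕ) : Irreducible (lucasTwoPow k) := by
  refine (isEisensteinAt_two k).irreducible ?_ (monic k).isPrimitive ?_
  · exact Ideal.isPrime_span_singleton_of_prime Int.prime_two
  · rw [natDegree_eq]
    positivity

theorem minpoly_eq_of_aeval_eq_zero {A : Type*} [CommRing A] [IsDomain A] [CharZero A] {x : A}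
    {k : ℕ} (hx : aeval x (lucasTwoPow k) = 0) : minpoly ℤ x = lucasTwoPow k := by
  have hint : IsIntegral ℤ x := ⟨lucasTwoPow k, monic k, hx⟩
  refine eq_of_monic_of_associated (minpoly.monic hint) (monic k) ?_
  exact (minpoly.irreducible hint).associated_of_dvd (irreducible k)
    (minpoly.isIntegrallyClosed_dvd hint hx)

theorem aeval_sub {A : Type*} [CommRing A] {x y : A} (hxy : x * y = 1) (k : ℕ) :
    aeval (x - y) (lucasTwoPow k) = x ^ 2 ^ (k + 1) + y ^ 2 ^ (k + 1) := by
  induction k with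
  | zero =>
    simp only [lucasTwoPow, map_add, map_pow, aeval_X, map_ofNat, zero_add, pow_one]
    linear_combination -2 * hxy
  | succ k ih =>
    have hpow : x ^ 2 ^ (k + 1) * y ^ 2 ^ (k + 1) = 1 := by rw [← mul_pow, hxy, one_pow]
    simp only [lucasTwoPow, map_sub, map_pow, ih, map_ofNat]
    rw [pow_succ 2 (k + 1), pow_mul, pow_mul]
    linear_combination 2 * hpow

theorem aeval_sub_inv_of_isPrimitiveRoot {L : Type*} [Field L] {ζ : L} {k : ℕ}
    (hζ : IsPrimitiveRoot ζ (2 ^ (k + 3))) : aeval (ζ - ζ⁻¹) (lucasTwoPow k) = 0 := by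
  have hζ0 : ζ ≠ 0 := hζ.ne_zero (by positivity)
  have hneg : ζ ^ 2 ^ (k + 2) = -1 :=
    (hζ.pow (by positivity) (pow_succ 2 (k + 2))).eq_neg_one_of_two_right
  rw [pow_succ 2 (k + 1), pow_mul] at hneg
  rw [aeval_sub (mul_inv_cancel₀ hζ0), inv_pow]
  field_simp
  linear_combination hneg

theorem derivative_eq (k : ℕ) :
    derivative (lucasTwoPow k) =
      C (2 ^ (k + 1)) * (X * ∏ j ∈ Finset.range k, lucasTwoPow j) := by
  induction k with
  | zero => simp [lucasTwoPow]
  | succ k ih =>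
    rw [Finset.prod_range_succ, pow_succ, C_mul, lucasTwoPow]
    simp only [derivative_sub, derivative_pow, derivative_ofNat, ih, sub_zero, Nat.cast_ofNat,
      Nat.add_one_sub_one, pow_one, C_ofNat]
    ring

theorem dvd_succ_add_two (j : ℕ) : lucasTwoPow j ∣ lucasTwoPow (j + 1) + 2 :=
  ⟨lucasTwoPow j, by rw [lucasTwoPow]; ring⟩

theorem dvd_add_two_sub_two (j i : ℕ) : lucasTwoPow j ∣ lucasTwoPow (j + 2 + i) - 2 := by
  induction i with
  | zero =>
    have h : lucasTwoPow (j + 2) - 2 = (lucasTwoPow (j + 1) + 2) * (lucasTwoPow (j + 1) - 2) := by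
      rw [lucasTwoPow]; ring
    exact h ▸ (dvd_succ_add_two j).mul_right _
  | succ i ih =>
    have h : lucasTwoPow (j + 2 + (i + 1)) - 2 =
        (lucasTwoPow (j + 2 + i) - 2) * (lucasTwoPow (j + 2 + i) + 2) := by
      rw [← add_assoc, lucasTwoPow]; ring
    exact h ▸ ih.mul_right _

theorem natAbs_resultant {j k : ℕ} (hjk : j < k) :
    (resultant (lucasTwoPow k) (lucasTwoPow j)).natAbs = 2 ^ 2 ^ (j + 1) := by
  obtain ⟨r, hr, hdvd⟩ : ∃ r : ℤ, r.natAbs = 2 ∧ lucasTwoPow j ∣ lucasTwoPow k - C r := by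
    obtain ⟨_ | i, rfl⟩ := Nat.exists_eq_add_of_lt hjk
    · exact ⟨-2, rfl, by simpa using dvd_succ_add_two j⟩
    · refine ⟨2, rfl, ?_⟩
      rw [show j + (i + 1) + 1 = j + 2 + i by ring]
      exact dvd_add_two_sub_two j i
  rw [resultant_eq_of_dvd_sub_C (monic j) hdvd, Int.natAbs_mul, Int.natAbs_pow, Int.natAbs_pow,
    hr, natDegree_eq j, Int.natAbs_neg, Int.natAbs_one, one_pow, one_mul]

theorem natAbs_resultant_X (k : ℕ) : (resultant (lucasTwoPow k) X).natAbs = 2 := by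
  have h := resultant_X_sub_C_right (lucasTwoPow k) _ 0 le_rfl
  rw [C_0, sub_zero, eval_zero] at h
  simp [h, Int.natAbs_mul, Int.natAbs_pow]

theorem resultant_derivative (k : ℕ) :
    resultant (lucasTwoPow k) (derivative (lucasTwoPow k)) =
      (2 ^ (k + 1)) ^ 2 ^ (k + 1) * (resultant (lucasTwoPow k) X *
        ∏ j ∈ Finset.range k, resultant (lucasTwoPow k) (lucasTwoPow j)) := by
  have hprod : (∏ j ∈ Finset.range k, lucasTwoPow j).Monic :=
    monic_prod_of_monic _ _ fun j _ ↦ monic j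
  have hlead : ∏ j ∈ Finset.range k, (lucasTwoPow j).leadingCoeff ≠ 0 := by
    simp [(monic _).leadingCoeff]
  rw [derivative_eq, natDegree_C_mul (by positivity), resultant_C_mul_right,
    natDegree_mul X_ne_zero hprod.ne_zero, resultant_mul_right _ _ _ _ le_rfl,
    resultant_prod_right _ _ _ _ le_rfl hlead, natDegree_eq]

theorem natAbs_discr (k : ℕ) :
    (lucasTwoPow k).discr.natAbs =
      (2 ^ (k + 1)) ^ 2 ^ (k + 1) * 2 ^ (2 ^ (k + 1) - 1) := by
  have hdeg : (lucasTwoPow k).natDegree ≠ 0 := by rw [natDegree_eq]; positivity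
  have hexp : ∑ j ∈ Finset.range k, 2 ^ (j + 1) + 1 = 2 ^ (k + 1) - 1 := by
    have hgeom := Nat.geomSum_eq (m := 2) le_rfl (k + 1)
    rw [Finset.sum_range_succ'] at hgeom
    simpa using hgeom
  have hprod : (∏ j ∈ Finset.range k, resultant (lucasTwoPow k) (lucasTwoPow j)).natAbs =
      ∏ j ∈ Finset.range k, 2 ^ 2 ^ (j + 1) :=
    (map_prod Int.natAbsHom _ _).trans <|
      Finset.prod_congr rfl fun j hj ↦ natAbs_resultant (Finset.mem_range.1 hj)
  rw [natAbs_discr_eq_natAbs_resultant_derivative (monic k) hdeg, resultant_derivative,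
    Int.natAbs_mul, Int.natAbs_mul, natAbs_resultant_X, hprod, Finset.prod_pow_eq_pow_sum,
    ← pow_succ', hexp, Int.natAbs_pow, Int.natAbs_pow, show Int.natAbs 2 = 2 from rfl]

end lucasTwoPow

theorem discr_adjoin_zeta_sub_zeta_inv_general {L : Type*} [Field L] [CharZero L]
    (r : ℕ) (hr : 3 ≤ r) (ζ : L) (hζ : IsPrimitiveRoot ζ (2 ^ r))
    [NumberField ℚ⟮ζ - ζ⁻¹⟯] :
    (NumberField.discr ℚ⟮ζ - ζ⁻¹⟯).natAbs =
      (2 ^ (r - 2)) ^ (2 ^ (r - 2)) * 2 ^ (2 ^ (r - 2) - 1) := by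
  obtain ⟨k, rfl⟩ := Nat.exists_eq_add_of_le' hr
  have hroot := lucasTwoPow.aeval_sub_inv_of_isPrimitiveRoot hζ
  have hint : IsIntegral ℤ (ζ - ζ⁻¹) := ⟨_, lucasTwoPow.monic k, hroot⟩
  let B := adjoin.powerBasis (K := ℚ) hint.tower_top
  have hgen : algebraMap ℚ⟮ζ - ζ⁻¹⟯ L B.gen = ζ - ζ⁻¹ := AdjoinSimple.algebraMap_gen ℚ _
  have hmin : minpoly ℤ B.gen = lucasTwoPow k := by
    rw [← minpoly.algebraMap_eq (algebraMap ℚ⟮ζ - ζ⁻¹⟯ L).injective, hgen,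
      lucasTwoPow.minpoly_eq_of_aeval_eq_zero hroot]
  have hintB : IsIntegral ℤ B.gen :=
    (isIntegral_algebraMap_iff (algebraMap ℚ⟮ζ - ζ⁻¹⟯ L).injective).1 (hgen.symm ▸ hint)
  have hdiscr := lucasTwoPow.natAbs_discr k
  rw [discr_eq_discr_minpoly_of_isEisensteinAt hintB Nat.prime_two
    (hmin ▸ lucasTwoPow.isEisensteinAt_two k), hmin, hdiscr]
  · rfl
  · rw [hmin, hdiscr, ← pow_mul, ← pow_add]

theorem discr_adjoin_zeta_sub_zeta_inv
    (r : ℕ) (hr : 3 ≤ r) (ζ : ℂ) (hζ : IsPrimitiveRoot ζ (2 ^ r))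
    [NumberField ℚ⟮ζ - ζ⁻¹⟯] :
    (NumberField.discr ℚ⟮ζ - ζ⁻¹⟯).natAbs =
      (2 ^ (r - 2)) ^ (2 ^ (r - 2)) * 2 ^ (2 ^ (r - 2) - 1) :=
  discr_adjoin_zeta_sub_zeta_inv_general r hr ζ hζ
end
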